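/- arXiv:2503.02822 — 3 statements merged into one kernel-verified Lean document; each statement's English description precedes it below -/
import Mathlib

section
/- For every r ∈ ℕ, the integral I_r := ∫_{y ∈ ℝ_{>0}^r, h_r(y) ≤ 1} dy is finite, and for every ε > 0 and 1 ≤ a ≤ r, the restricted integral I_{r,a,ε} := ∫_{y ∈ ℝ_{>0}^r, h_r(y) ≤ 1, y_a ≤ ε} dy satisfies I_{r,a,ε} ≤ C(r) · ε^{1/r} for some constant C(r) depending only on r. -/
open Finset MeasureTheory

/-- `h_r(y) = ∏_{1 ≤ ℓ ≤ j ≤ r} (y_ℓ + ⋯ + y_j)`. -/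
noncomputable def hpoly (r : ℕ) (y : Fin r → ℝ) : ℝ :=
  ∏ p ∈ Finset.univ.filter (fun p : Fin r × Fin r => p.1 ≤ p.2),
    ∑ i ∈ Finset.Icc p.1 p.2, y i

/-!
The square of `h_r` dominates the symmetric function `∏_{l,j} max(y_l, y_j) · ∏_l y_l`. In the
coordinates `L = log y`, the bound `≤ 1` on this function forces `∑ |L_l| ≤ -5 ∑ L_l`, so the
indicator of the region is dominated by a product of integrable functions of one variable, which
gives finiteness. For the restricted integral, freeze `y_a = z ≤ 1`: the remaining coordinates lie
in a sublevel set of a function of the same kind, whose volume is `O(z ^ (1/r - 1))` by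
homogeneity, and integrating over `0 < z ≤ ε` gives `O(ε ^ (1/r))`.
-/

section MaxProd

variable {ι : Type*} [Fintype ι] {k : ℕ} {y : ι → ℝ}

/-- The symmetric, homogeneous minorant of `h_r ^ 2` (for `k = 1`): the product of the maxima over
all ordered pairs, diagonal included, times `(∏ l, y l) ^ k`. The extra parameter `k` makes the
family stable under freezing one coordinate. -/
def maxProd (k : ℕ) (y : ι → ℝ) : ℝ :=
  (∏ l, ∏ j, max (y l) (y j)) * (∏ l, y l) ^ k

theorem maxProd_nonneg (hy : ∀ i, 0 ≤ y i) : 0 ≤ maxProd k y :=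
  mul_nonneg (prod_nonneg fun l _ => prod_nonneg fun _ _ => le_max_of_le_left (hy l))
    (pow_nonneg (prod_nonneg fun l _ => hy l) k)

theorem measurable_maxProd : Measurable (maxProd k : (ι → ℝ) → ℝ) := by
  unfold maxProd
  fun_prop

theorem maxProd_smul {c : ℝ} (hc : 0 ≤ c) :
    maxProd k (c • y) = c ^ (Fintype.card ι * (Fintype.card ι + k)) * maxProd k y := by
  simp only [maxProd, Pi.smul_apply, smul_eq_mul, ← mul_max_of_nonneg _ _ hc, prod_mul_distrib,
    prod_const, card_univ]
  ring

theorem log_maxProd (hy : ∀ i, 0 < y i) :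
    Real.log (maxProd k y) =
      ∑ l, ∑ j, max (Real.log (y l)) (Real.log (y j)) + k * ∑ l, Real.log (y l) := by
  have hmax (l j : ι) : max (y l) (y j) ≠ 0 := (lt_max_of_lt_left (hy l)).ne'
  have hrow (l : ι) : ∏ j, max (y l) (y j) ≠ 0 := prod_ne_zero_iff.2 fun j _ => hmax l j
  have hprod : ∏ l, y l ≠ 0 := prod_ne_zero_iff.2 fun l _ => (hy l).ne'
  rw [maxProd, Real.log_mul (prod_ne_zero_iff.2 fun l _ => hrow l) (pow_ne_zero k hprod),
    Real.log_pow, Real.log_prod fun l _ => hrow l, Real.log_prod fun l _ => (hy l).ne']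
  simp only [Real.log_prod fun j _ => hmax _ j,
    Real.strictMonoOn_log.monotoneOn.map_max (hy _) (hy _)]

theorem maxProd_mul_pow_le_maxProd_insertNth {n : ℕ} (a : Fin (n + 1)) {z : ℝ} {x : Fin n → ℝ}
    (hz : 0 ≤ z) (hx : ∀ i, 0 ≤ x i) :
    maxProd (k + 2) x * z ^ (k + 1) ≤ maxProd k (a.insertNth z x : Fin (n + 1) → ℝ) := by
  have hsplit : maxProd k (a.insertNth z x : Fin (n + 1) → ℝ) =
      (∏ j, max z (x j)) ^ 2 * ((∏ l, ∏ j, max (x l) (x j)) * (∏ l, x l) ^ k * z ^ (k + 1)) := by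
    simp only [maxProd, Fin.prod_univ_succAbove _ a, Fin.insertNth_apply_same,
      Fin.insertNth_apply_succAbove, prod_mul_distrib, max_self, max_comm _ z]
    ring
  have hrest : 0 ≤ (∏ l, ∏ j, max (x l) (x j)) * (∏ l, x l) ^ k * z ^ (k + 1) :=
    mul_nonneg (maxProd_nonneg hx) (pow_nonneg hz _)
  calc maxProd (k + 2) x * z ^ (k + 1)
      = (∏ j, x j) ^ 2 * ((∏ l, ∏ j, max (x l) (x j)) * (∏ l, x l) ^ k * z ^ (k + 1)) := by
        rw [maxProd]; ring
    _ ≤ (∏ j, max z (x j)) ^ 2 *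
          ((∏ l, ∏ j, max (x l) (x j)) * (∏ l, x l) ^ k * z ^ (k + 1)) := by
        gcongr with j
        · exact prod_nonneg fun j _ => hx j
        · exact fun j _ => hx j
        · exact le_max_right _ _
    _ = maxProd k (a.insertNth z x : Fin (n + 1) → ℝ) := hsplit.symm

end MaxProd

section Comparison

variable {r : ℕ} {y : Fin r → ℝ}

theorem hpoly_nonneg (hy : ∀ i, 0 ≤ y i) : 0 ≤ hpoly r y :=
  prod_nonneg fun _ _ => sum_nonneg fun i _ => hy i

theorem hpoly_sq (y : Fin r → ℝ) :
    hpoly r y ^ 2 = (∏ l, ∏ j, ∑ i ∈ uIcc l j, y i) * ∏ l, y l := by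
  have hupper : hpoly r y = ∏ l, ∏ j, if l ≤ j then ∑ i ∈ Icc l j, y i else 1 := by
    rw [hpoly, prod_filter, Fintype.prod_prod_type]
  have hlower : hpoly r y = ∏ l, ∏ j, if j ≤ l then ∑ i ∈ Icc j l, y i else 1 :=
    hupper.trans prod_comm
  have hdiag : ∏ l, y l = ∏ l, ∏ j, if l = j then y l else 1 := by
    simp only [prod_ite_eq, mem_univ, if_true]
  rw [sq]
  nth_rewrite 1 [hupper]
  rw [hlower, hdiag]
  simp only [← prod_mul_distrib]
  refine prod_congr rfl fun l _ => prod_congr rfl fun j _ => ?_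
  rcases lt_trichotomy l j with h | rfl | h
  · simp [h.le, h.ne, h.not_ge]
  · simp
  · simp [h.le, h.ne', h.not_ge]

theorem maxProd_one_le_hpoly_sq (hy : ∀ i, 0 ≤ y i) : maxProd 1 y ≤ hpoly r y ^ 2 := by
  have hterm {l j i : Fin r} (hi : i ∈ uIcc l j) : y i ≤ ∑ i ∈ uIcc l j, y i :=
    single_le_sum (fun i _ => hy i) hi
  rw [hpoly_sq, maxProd, pow_one]
  refine mul_le_mul_of_nonneg_right ?_ (prod_nonneg fun l _ => hy l)
  refine prod_le_prod (fun l _ => prod_nonneg fun _ _ => le_max_of_le_left (hy l)) fun l _ => ?_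
  exact prod_le_prod (fun _ _ => le_max_of_le_left (hy l)) fun j _ =>
    max_le (hterm left_mem_uIcc) (hterm right_mem_uIcc)

end Comparison

section LogCoordinates

variable {ι : Type*} [Fintype ι]

theorem sum_sum_max_eq (L : ι → ℝ) :
    ∑ l, ∑ j, max (L l) (L j) =
      Fintype.card ι * ∑ l, L l + (∑ l, ∑ j, |L l - L j|) / 2 := by
  have hmax (u v : ℝ) : max u v = u / 2 + v / 2 + |u - v| / 2 := by
    rw [max_comm, max_def, abs_eq_max_neg, max_def]
    split_ifs <;> linarith
  simp only [hmax, sum_add_distrib, ← sum_div, sum_const, card_univ, nsmul_eq_mul, ← mul_sum]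
  ring

theorem card_mul_sum_abs_le (L : ι → ℝ) :
    Fintype.card ι * ∑ l, |L l| ≤ Fintype.card ι * |∑ l, L l| + ∑ l, ∑ j, |L l - L j| := by
  have hrow (l : ι) : Fintype.card ι * |L l| ≤ |∑ j, L j| + ∑ j, |L l - L j| :=
    calc Fintype.card ι * |L l| = |∑ j, L j + ∑ j, (L l - L j)| := by
          simp [sum_sub_distrib, abs_mul]
      _ ≤ |∑ j, L j| + |∑ j, (L l - L j)| := abs_add_le _ _
      _ ≤ |∑ j, L j| + ∑ j, |L l - L j| := by gcongr; exact abs_sum_le_sum_abs _ _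
  calc Fintype.card ι * ∑ l, |L l| = ∑ l, Fintype.card ι * |L l| := mul_sum _ _ _
    _ ≤ ∑ l, (|∑ j, L j| + ∑ j, |L l - L j|) := sum_le_sum fun l _ => hrow l
    _ = Fintype.card ι * |∑ l, L l| + ∑ l, ∑ j, |L l - L j| := by
        simp [sum_add_distrib]

theorem sum_abs_le_of_sum_sum_max_add_nonpos {L : ι → ℝ} {k : ℝ} (hk : 0 ≤ k)
    (h : ∑ l, ∑ j, max (L l) (L j) + k * ∑ l, L l ≤ 0) :
    ∑ l, |L l| ≤ (2 * k + 3) * -∑ l, L l := by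
  rcases isEmpty_or_nonempty ι with _ | _
  · simp
  have hn : (1 : ℝ) ≤ Fintype.card ι := by exact_mod_cast Fintype.card_pos
  have hspread : 0 ≤ ∑ l, ∑ j, |L l - L j| :=
    sum_nonneg fun _ _ => sum_nonneg fun _ _ => abs_nonneg _
  have habs := card_mul_sum_abs_le L
  rw [sum_sum_max_eq] at h
  have hsum : ∑ l, L l ≤ 0 := by
    by_contra! hpos
    nlinarith
  rw [abs_of_nonpos hsum] at habs
  have hscaled : Fintype.card ι * ∑ l, |L l| ≤
      Fintype.card ι * ((2 * k + 3) * -∑ l, L l) := by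
    nlinarith [mul_nonneg (mul_nonneg hk (sub_nonneg.2 hn)) (neg_nonneg.2 hsum)]
  exact le_of_mul_le_mul_left hscaled (by linarith)

theorem one_le_prod_exp_of_maxProd_le_one {k : ℕ} {y : ι → ℝ} (hy : ∀ i, 0 < y i)
    (h : maxProd k y ≤ 1) :
    1 ≤ ∏ i, Real.exp (-Real.log (y i) - (2 * k + 3 : ℝ)⁻¹ * |Real.log (y i)|) := by
  have hlog : ∑ i, |Real.log (y i)| ≤ (2 * k + 3) * -∑ i, Real.log (y i) := by
    refine sum_abs_le_of_sum_sum_max_add_nonpos k.cast_nonneg ?_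
    rw [← log_maxProd hy]
    exact Real.log_nonpos (maxProd_nonneg fun i => (hy i).le) h
  rw [← Real.exp_sum, Real.one_le_exp_iff, sum_sub_distrib, sum_neg_distrib, ← mul_sum, sub_nonneg]
  exact (inv_mul_le_iff₀ (by positivity)).2 hlog

end LogCoordinates

section Integrals

theorem integrableOn_Ioi_exp_neg_log_sub_abs_log {c : ℝ} (hc : 0 < c) :
    IntegrableOn (fun u => Real.exp (-Real.log u - c * |Real.log u|)) (Set.Ioi 0) := by
  rw [← Set.Ioc_union_Ioi_eq_Ioi zero_le_one]
  refine IntegrableOn.union ?_ ?_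
  · have hnear : IntegrableOn (fun u : ℝ => u ^ (c - 1)) (Set.Ioc 0 1) :=
      (intervalIntegrable_iff_integrableOn_Ioc_of_le zero_le_one).1
        (intervalIntegral.intervalIntegrable_rpow' (by linarith))
    refine hnear.congr_fun (fun u hu => ?_) measurableSet_Ioc
    simp only [Real.rpow_def_of_pos hu.1, abs_of_nonpos (Real.log_nonpos hu.1.le hu.2)]
    ring_nf
  · have hfar : IntegrableOn (fun u : ℝ => u ^ (-c - 1)) (Set.Ioi 1) :=
      integrableOn_Ioi_rpow_of_lt (by linarith) one_pos
    refine hfar.congr_fun (fun u (hu : 1 < u) => ?_) measurableSet_Ioi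
    simp only [Real.rpow_def_of_pos (one_pos.trans hu), abs_of_nonneg (Real.log_nonneg hu.le)]
    ring_nf

theorem lintegral_Ioc_rpow_sub_one {s ε : ℝ} (hs : 0 < s) (hε : 0 ≤ ε) :
    ∫⁻ z in Set.Ioc 0 ε, ENNReal.ofReal (z ^ (s - 1)) = ENNReal.ofReal (ε ^ s / s) := by
  have hint : IntegrableOn (fun z : ℝ => z ^ (s - 1)) (Set.Ioc 0 ε) :=
    (intervalIntegrable_iff_integrableOn_Ioc_of_le hε).1
      (intervalIntegral.intervalIntegrable_rpow' (by linarith))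
  have hnonneg : 0 ≤ᵐ[volume.restrict (Set.Ioc 0 ε)] fun z : ℝ => z ^ (s - 1) := by
    filter_upwards [ae_restrict_mem measurableSet_Ioc] with z hz
    exact Real.rpow_nonneg hz.1.le _
  rw [← ofReal_integral_eq_lintegral_ofReal hint hnonneg, ← intervalIntegral.integral_of_le hε,
    integral_rpow (Or.inl (by linarith)), sub_add_cancel, Real.zero_rpow hs.ne', sub_zero]

theorem volume_eq_lintegral_volume_insertNth_preimage {n : ℕ} {α : Fin (n + 1) → Type*}
    [∀ i, MeasureSpace (α i)] [∀ i, SigmaFinite (volume : Measure (α i))] (a : Fin (n + 1))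
    {s : Set (∀ i, α i)} (hs : MeasurableSet s) :
    volume s = ∫⁻ z, volume (a.insertNth z ⁻¹' s) := by
  have hmp := (volume_preserving_piFinSuccAbove α a).symm
  rw [← hmp.measure_preimage hs.nullMeasurableSet, Measure.volume_eq_prod,
    Measure.prod_apply (hmp.measurable hs)]
  rfl

end Integrals

section Sublevel

open scoped Pointwise

/-- The part of the open positive orthant on which `maxProd k ≤ t`. -/
def maxProdSublevel (ι : Type*) [Fintype ι] (k : ℕ) (t : ℝ) : Set (ι → ℝ) :=
  {y | (∀ i, 0 < y i) ∧ maxProd k y ≤ t}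

variable {ι : Type*} [Fintype ι] {n : ℕ}

theorem measurableSet_maxProdSublevel (k : ℕ) (t : ℝ) :
    MeasurableSet (maxProdSublevel ι k t) := by
  have hpos : MeasurableSet {y : ι → ℝ | ∀ i, 0 < y i} := by
    simp only [Set.ofPred_forall]
    exact MeasurableSet.iInter fun i => measurableSet_lt measurable_const (measurable_pi_apply i)
  exact hpos.inter (measurableSet_le measurable_maxProd measurable_const)

theorem volume_maxProdSublevel_one_lt_top (ι : Type*) [Fintype ι] (k : ℕ) :
    volume (maxProdSublevel ι k 1) < ⊤ := by
  let g : ℝ → ℝ := (Set.Ioi 0).indicator fun u =>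
    Real.exp (-Real.log u - (2 * k + 3 : ℝ)⁻¹ * |Real.log u|)
  have hg : Integrable g :=
    (integrableOn_Ioi_exp_neg_log_sub_abs_log (by positivity)).integrable_indicator
      measurableSet_Ioi
  have hprod : Integrable fun y : ι → ℝ => ∏ i, g (y i) := Integrable.fintype_prod fun _ => hg
  refine (measure_mono ?_).trans_lt (hprod.measure_norm_ge_lt_top one_pos)
  rintro y ⟨hy, h⟩
  have hge : 1 ≤ ∏ i, g (y i) := by
    simpa only [g, Set.indicator_of_mem (Set.mem_Ioi.2 (hy _))] using
      one_le_prod_exp_of_maxProd_le_one hy h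
  exact hge.trans (Real.le_norm_self _)

theorem maxProdSublevel_pow_mul {c : ℝ} (hc : 0 < c) (k : ℕ) (t : ℝ) :
    maxProdSublevel ι k (c ^ (Fintype.card ι * (Fintype.card ι + k)) * t) =
      c • maxProdSublevel ι k t := by
  ext y
  rw [Set.mem_smul_set_iff_inv_smul_mem₀ hc.ne']
  simp only [maxProdSublevel, Set.mem_ofPred_eq, maxProd_smul (inv_nonneg.2 hc.le), inv_pow,
    inv_mul_le_iff₀ (pow_pos hc _), Pi.smul_apply, smul_eq_mul, inv_pos, hc,
    mul_pos_iff_of_pos_left]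

theorem volume_maxProdSublevel_pow {c : ℝ} (hc : 0 < c) (k : ℕ) :
    volume (maxProdSublevel ι k (c ^ (Fintype.card ι * (Fintype.card ι + k)))) =
      ENNReal.ofReal (c ^ Fintype.card ι) * volume (maxProdSublevel ι k 1) := by
  rw [← mul_one (c ^ _), maxProdSublevel_pow_mul hc, Measure.addHaar_smul,
    Module.finrank_fintype_fun_eq_card, abs_of_pos (pow_pos hc _)]

theorem insertNth_pow_preimage_maxProdSublevel_subset (a : Fin (n + 1)) {w : ℝ} (hw : 0 < w)
    (hw1 : w ≤ 1) :
    a.insertNth (α := fun _ => ℝ) (w ^ (n + 1)) ⁻¹' maxProdSublevel (Fin (n + 1)) 1 1 ⊆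
      maxProdSublevel (Fin n) 3 (w⁻¹ ^ (n * (n + 3))) := by
  rintro x ⟨hpos, hle⟩
  have hx (i : Fin n) : 0 < x i := by simpa using hpos (a.succAbove i)
  refine ⟨hx, ?_⟩
  rcases n.eq_zero_or_pos with rfl | hn
  · simp [maxProd]
  have hdegree : (n + 1) * 2 ≤ n * (n + 3) := by nlinarith
  have hnonneg : 0 ≤ maxProd 3 x := maxProd_nonneg fun i => (hx i).le
  rw [inv_pow, ← one_div, le_div_iff₀ (pow_pos hw _)]
  calc maxProd 3 x * w ^ (n * (n + 3)) ≤ maxProd 3 x * w ^ ((n + 1) * 2) := by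
        gcongr ?_ * ?_
        exact pow_le_pow_of_le_one hw.le hw1 hdegree
    _ = maxProd 3 x * (w ^ (n + 1)) ^ (1 + 1) := by rw [pow_mul]
    _ ≤ maxProd 1 (a.insertNth (w ^ (n + 1)) x : Fin (n + 1) → ℝ) :=
        maxProd_mul_pow_le_maxProd_insertNth a (pow_pos hw _).le fun i => (hx i).le
    _ ≤ 1 := hle

theorem volume_insertNth_preimage_maxProdSublevel_le (a : Fin (n + 1)) {z : ℝ} (hz : 0 < z)
    (hz1 : z ≤ 1) :
    volume (a.insertNth (α := fun _ => ℝ) z ⁻¹' maxProdSublevel (Fin (n + 1)) 1 1) ≤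
      ENNReal.ofReal (z ^ (1 / (n + 1 : ℝ) - 1)) * volume (maxProdSublevel (Fin n) 3 1) := by
  let w : ℝ := z ^ (1 / (n + 1 : ℝ))
  have hw : 0 < w := Real.rpow_pos_of_pos hz _
  have hw1 : w ≤ 1 := Real.rpow_le_one hz.le hz1 (by positivity)
  have hwz : w ^ (n + 1) = z := by
    rw [← Real.rpow_mul_natCast hz.le]
    push_cast
    rw [one_div_mul_cancel (by positivity), Real.rpow_one]
  have hscale : z ^ (1 / (n + 1 : ℝ) - 1) = w⁻¹ ^ n := by
    rw [Real.rpow_sub_one hz.ne', inv_pow]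
    refine eq_inv_of_mul_eq_one_left ?_
    rw [div_mul_eq_mul_div, ← pow_succ', hwz, div_self hz.ne']
  calc volume (a.insertNth (α := fun _ => ℝ) z ⁻¹' maxProdSublevel (Fin (n + 1)) 1 1)
      ≤ volume (maxProdSublevel (Fin n) 3 (w⁻¹ ^ (n * (n + 3)))) := by
        rw [← hwz]
        exact measure_mono (insertNth_pow_preimage_maxProdSublevel_subset a hw hw1)
    _ = ENNReal.ofReal (z ^ (1 / (n + 1 : ℝ) - 1)) * volume (maxProdSublevel (Fin n) 3 1) := by
        simpa only [Fintype.card_fin, hscale] using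
          volume_maxProdSublevel_pow (ι := Fin n) (inv_pos.2 hw) 3

theorem volume_maxProdSublevel_inter_coord_le (a : Fin (n + 1)) {ε : ℝ} (hε : 0 ≤ ε)
    (hε1 : ε ≤ 1) :
    volume (maxProdSublevel (Fin (n + 1)) 1 1 ∩ {y | y a ≤ ε}) ≤
      ENNReal.ofReal ((n + 1) * ε ^ (1 / (n + 1 : ℝ))) * volume (maxProdSublevel (Fin n) 3 1) := by
  set K := volume (maxProdSublevel (Fin n) 3 1)
  have hmeas : MeasurableSet (maxProdSublevel (Fin (n + 1)) 1 1 ∩ {y | y a ≤ ε}) :=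
    (measurableSet_maxProdSublevel 1 1).inter
      (measurableSet_le (measurable_pi_apply a) measurable_const)
  have hslice (z : ℝ) :
      volume (a.insertNth (α := fun _ => ℝ) z ⁻¹'
          (maxProdSublevel (Fin (n + 1)) 1 1 ∩ {y | y a ≤ ε})) ≤
        (Set.Ioc 0 ε).indicator
          (fun z => ENNReal.ofReal (z ^ (1 / (n + 1 : ℝ) - 1)) * K) z := by
    by_cases hz : z ∈ Set.Ioc 0 ε
    · rw [Set.indicator_of_mem hz]
      exact (measure_mono (Set.preimage_mono Set.inter_subset_left)).trans
        (volume_insertNth_preimage_maxProdSublevel_le a hz.1 (hz.2.trans hε1))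
    · rw [Set.indicator_of_notMem hz]
      refine (measure_mono_null ?_ measure_empty).le
      rintro x ⟨⟨hpos, -⟩, hle⟩
      exact hz ⟨by simpa using hpos a, by simpa using hle⟩
  calc volume (maxProdSublevel (Fin (n + 1)) 1 1 ∩ {y | y a ≤ ε})
      ≤ ∫⁻ z, (Set.Ioc 0 ε).indicator
          (fun z => ENNReal.ofReal (z ^ (1 / (n + 1 : ℝ) - 1)) * K) z := by
        rw [volume_eq_lintegral_volume_insertNth_preimage a hmeas]
        exact lintegral_mono hslice
    _ = (∫⁻ z in Set.Ioc 0 ε, ENNReal.ofReal (z ^ (1 / (n + 1 : ℝ) - 1))) * K := by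
        rw [lintegral_indicator measurableSet_Ioc, lintegral_mul_const _ (by fun_prop)]
    _ = ENNReal.ofReal ((n + 1) * ε ^ (1 / (n + 1 : ℝ))) * K := by
        rw [lintegral_Ioc_rpow_sub_one (by positivity) hε, div_div_eq_mul_div, div_one,
          mul_comm (ε ^ _)]

theorem exists_volume_maxProdSublevel_inter_coord_le (n : ℕ) :
    ∃ C : ℝ, ∀ ε : ℝ, 0 < ε → ∀ a : Fin (n + 1),
      volume (maxProdSublevel (Fin (n + 1)) 1 1 ∩ {y | y a ≤ ε}) ≤
        ENNReal.ofReal (C * ε ^ (1 / (n + 1 : ℝ))) := by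
  lift volume (maxProdSublevel (Fin n) 3 1) to NNReal using
    (volume_maxProdSublevel_one_lt_top _ _).ne with K hK
  lift volume (maxProdSublevel (Fin (n + 1)) 1 1) to NNReal using
    (volume_maxProdSublevel_one_lt_top _ _).ne with V hV
  refine ⟨max ((n + 1) * K) V, fun ε hε a => ?_⟩
  rcases le_total ε 1 with h | h
  · refine (volume_maxProdSublevel_inter_coord_le a hε.le h).trans ?_
    rw [← hK, ← ENNReal.ofReal_coe_nnreal, ← ENNReal.ofReal_mul (by positivity), mul_right_comm]
    gcongr
    exact le_max_left _ _
  · refine (measure_mono Set.inter_subset_left).trans ?_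
    rw [← hV, ← ENNReal.ofReal_coe_nnreal]
    refine ENNReal.ofReal_le_ofReal ((le_max_right ((n + 1) * K : ℝ) V).trans ?_)
    exact le_mul_of_one_le_right (by positivity) (Real.one_le_rpow h (by positivity))

theorem hpoly_sublevel_subset_maxProdSublevel (r : ℕ) :
    {y : Fin r → ℝ | (∀ i, 0 < y i) ∧ hpoly r y ≤ 1} ⊆ maxProdSublevel (Fin r) 1 1 := by
  rintro y ⟨hy, h⟩
  have hy' (i : Fin r) : 0 ≤ y i := (hy i).le
  exact ⟨hy, (maxProd_one_le_hpoly_sq hy').trans (pow_le_one₀ (hpoly_nonneg hy') h)⟩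

end Sublevel

/-- Lemma 2.2: `I_r < ∞` and `I_{r,a,ε} ≪_r ε^{1/r}`. -/
theorem stmt1 (r : ℕ) (hr : 1 ≤ r) :
    volume {y : Fin r → ℝ | (∀ i, 0 < y i) ∧ hpoly r y ≤ 1} < ⊤ ∧
    ∃ C : ℝ, ∀ ε : ℝ, 0 < ε → ∀ a : Fin r,
      volume {y : Fin r → ℝ | (∀ i, 0 < y i) ∧ hpoly r y ≤ 1 ∧ y a ≤ ε}
        ≤ ENNReal.ofReal (C * ε ^ ((1 : ℝ) / r)) := by
  refine ⟨(measure_mono (hpoly_sublevel_subset_maxProdSublevel r)).trans_lt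
    (volume_maxProdSublevel_one_lt_top (Fin r) 1), ?_⟩
  obtain ⟨n, rfl⟩ := Nat.exists_eq_add_of_le' hr
  obtain ⟨C, hC⟩ := exists_volume_maxProdSublevel_inter_coord_le n
  refine ⟨C, fun ε hε a => ?_⟩
  rw [Nat.cast_add_one]
  refine (measure_mono ?_).trans (hC ε hε a)
  rintro y ⟨hy, hh, hya⟩
  exact ⟨hpoly_sublevel_subset_maxProdSublevel _ ⟨hy, hh⟩, hya⟩
end

section
/- For every r ∈ ℕ and real x > 0, the number of lattice points k ∈ ℕ^r (positive integer coordinates) with h_r(k) ≤ x equals I_r · x^{2/(r+1)} + O_r(x^{2(r-1)/r²}), where I_r := ∫_{y ∈ ℝ_{>0}^r, h_r(y) ≤ 1} dy. -/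
open Finset MeasureTheory

/-!
Write `D(x)` for the region `h_r ≤ x` of the open orthant. Since `h_r` is monotone, the unit cubes
below the positive lattice points of `D(x)` are disjoint and contained in `D(x)`, while the unit
cubes above them cover `D(x)` up to the strips where some coordinate is at most `1`. By homogeneity
`vol D(x) = vol D(1) * x ^ (2 / (r + 1))`, so the error is at most the volume of the `r` strips.

On the strip `y i ≤ 1`, put `u j = log (y j)` and `T = 2 log x / r ^ 2`. As `y_ℓ + ⋯ + y_j` is at
least `max y_ℓ y_j`, one gets `∑ a, ∑ b, max (u a) (u b) + ∑ a, u a ≤ r ^ 2 * T`, and this forces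
`∑ j ≠ i, ((u j - T) + |u j - T| / 9) ≤ -(2 / 3) * u i`. Exponentiating, `1` is bounded on the strip
by a product of integrable one-variable functions, one of them fixed and the other `r - 1` dilated
by `exp T = x ^ (2 / r ^ 2)`, whence the volume is `O(x ^ (2 * (r - 1) / r ^ 2))`.
-/

section LatticePoints

variable {ι α : Type*} [Preorder α]

/-- The real sublevel set `{f ≤ x}` inside the open positive orthant. -/
def posSublevel (f : (ι → ℝ) → α) (x : α) : Set (ι → ℝ) :=
  {y | (∀ i, 0 < y i) ∧ f y ≤ x}

/-- The lattice points with positive coordinates in the sublevel set `{f ≤ x}`, as vectors of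
natural numbers. -/
def natSublevel (f : (ι → ℝ) → α) (x : α) : Set (ι → ℕ) :=
  {k | (∀ i, 0 < k i) ∧ f (fun i => (k i : ℝ)) ≤ x}

lemma pairwiseDisjoint_pi_Ioc_natCast (s : Set (ι → ℕ)) :
    s.PairwiseDisjoint fun k => Set.univ.pi fun i => Set.Ioc ((k i : ℝ) - 1) (k i) := by
  intro k _ l _ hkl
  rw [Function.onFun, Set.disjoint_left]
  refine fun y hk hl => hkl (funext fun i => ?_)
  obtain ⟨hk₁, hk₂⟩ := hk i (Set.mem_univ i)
  obtain ⟨hl₁, hl₂⟩ := hl i (Set.mem_univ i)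
  have hkl_lt : k i < l i + 1 := by exact_mod_cast (by linarith : (k i : ℝ) < l i + 1)
  have hlk_lt : l i < k i + 1 := by exact_mod_cast (by linarith : (l i : ℝ) < k i + 1)
  lia

variable [Fintype ι] {f : (ι → ℝ) → α}

lemma encard_natSublevel_le_volume (hf : MonotoneOn f {y | ∀ i, 0 < y i}) (x : α) :
    ((natSublevel f x).encard : ENNReal) ≤ volume (posSublevel f x) := by
  let cube (k : ι → ℕ) : Set (ι → ℝ) := Set.univ.pi fun i => Set.Ioc ((k i : ℝ) - 1) (k i)
  have volume_cube (k : ι → ℕ) : volume (cube k) = 1 := by simp [cube, Real.volume_pi_Ioc]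
  calc ((natSublevel f x).encard : ENNReal)
      = ∑' k : natSublevel f x, volume (cube k) := by
        simp only [volume_cube, ENNReal.tsum_set_one]
    _ = volume (⋃ k ∈ natSublevel f x, cube k) :=
        (measure_biUnion (Set.to_countable _) (pairwiseDisjoint_pi_Ioc_natCast _)
          fun k _ => MeasurableSet.univ_pi fun i => measurableSet_Ioc).symm
    _ ≤ volume (posSublevel f x) := by
        refine measure_mono (Set.iUnion₂_subset fun k hk y hy => ?_)
        have k_pos (i : ι) : (1 : ℝ) ≤ k i := by exact_mod_cast hk.1 i
        have y_pos (i : ι) : 0 < y i := by linarith [k_pos i, (hy i (Set.mem_univ i)).1]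
        have y_le : y ≤ fun i => (k i : ℝ) := fun i => (hy i (Set.mem_univ i)).2
        exact ⟨y_pos, (hf y_pos (fun i => zero_lt_one.trans_le (k_pos i)) y_le).trans hk.2⟩

lemma volume_posSublevel_le (hf : MonotoneOn f {y | ∀ i, 0 < y i}) (x : α) :
    volume (posSublevel f x) ≤
      (natSublevel f x).encard + ∑ i, volume {y ∈ posSublevel f x | y i ≤ 1} := by
  let cube (k : ι → ℕ) : Set (ι → ℝ) := Set.univ.pi fun i => Set.Ico (k i : ℝ) (k i + 1)
  have volume_cube (k : ι → ℕ) : volume (cube k) = 1 := by simp [cube, Real.volume_pi_Ico]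
  have cover : posSublevel f x ⊆
      (⋃ k ∈ natSublevel f x, cube k) ∪ ⋃ i, {y ∈ posSublevel f x | y i ≤ 1} := by
    intro y hy
    by_cases h : ∃ i, y i ≤ 1
    · obtain ⟨i, hi⟩ := h
      exact Or.inr (Set.mem_iUnion.2 ⟨i, hy, hi⟩)
    · push Not at h
      have floor_pos (i : ι) : 0 < ⌊y i⌋₊ := Nat.floor_pos.2 (h i).le
      have floor_le (i : ι) : (⌊y i⌋₊ : ℝ) ≤ y i := Nat.floor_le (hy.1 i).le
      refine Or.inl (Set.mem_iUnion₂.2 ⟨fun i => ⌊y i⌋₊, ⟨floor_pos, ?_⟩, fun i _ => ?_⟩)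
      · exact (hf (fun i => Nat.cast_pos.2 (floor_pos i)) hy.1 floor_le).trans hy.2
      · exact ⟨floor_le i, Nat.lt_floor_add_one _⟩
  calc volume (posSublevel f x)
      ≤ volume (⋃ k ∈ natSublevel f x, cube k) +
          volume (⋃ i, {y ∈ posSublevel f x | y i ≤ 1}) :=
        (measure_mono cover).trans (measure_union_le _ _)
    _ ≤ ∑' k : natSublevel f x, volume (cube k) +
          ∑ i, volume {y ∈ posSublevel f x | y i ≤ 1} :=
        add_le_add (measure_biUnion_le _ (Set.to_countable _) _) (measure_iUnion_fintype_le _ _)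
    _ = (natSublevel f x).encard + ∑ i, volume {y ∈ posSublevel f x | y i ≤ 1} := by
        simp only [volume_cube, ENNReal.tsum_set_one]

lemma abs_ncard_natSublevel_sub_volume_le (hf : MonotoneOn f {y | ∀ i, 0 < y i}) {x : α}
    (hfin : (natSublevel f x).Finite) {ε : ℝ} (hε : 0 ≤ ε)
    (hstrip : ∀ i, volume {y ∈ posSublevel f x | y i ≤ 1} ≤ ENNReal.ofReal ε) :
    |((natSublevel f x).ncard : ℝ) - (volume (posSublevel f x)).toReal| ≤ Fintype.card ι * ε := by
  have hcast : ((natSublevel f x).encard : ENNReal) = (natSublevel f x).ncard := by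
    rw [← hfin.cast_ncard_eq, ENat.toENNReal_coe]
  have lower := encard_natSublevel_le_volume hf x
  have upper : volume (posSublevel f x) ≤
      ENNReal.ofReal ((natSublevel f x).ncard + Fintype.card ι * ε) :=
    calc volume (posSublevel f x)
        ≤ (natSublevel f x).encard + ∑ i, volume {y ∈ posSublevel f x | y i ≤ 1} :=
          volume_posSublevel_le hf x
      _ ≤ (natSublevel f x).ncard + ∑ _i : ι, ENNReal.ofReal ε := by
          rw [hcast]
          gcongr with i
          exact hstrip i
      _ = ENNReal.ofReal ((natSublevel f x).ncard + Fintype.card ι * ε) := by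
          rw [ENNReal.ofReal_add (by positivity) (by positivity),
            ENNReal.ofReal_mul (by positivity)]
          simp
  have lower_real : ((natSublevel f x).ncard : ℝ) ≤ (volume (posSublevel f x)).toReal := by
    simpa [hcast] using ENNReal.toReal_mono (ne_top_of_le_ne_top ENNReal.ofReal_ne_top upper) lower
  have upper_real := ENNReal.toReal_le_of_le_ofReal (by positivity) upper
  rw [abs_sub_comm, abs_of_nonneg (sub_nonneg.2 lower_real)]
  linarith

end LatticePoints

section Homogeneous

open scoped Pointwise

variable {ι : Type*} {f : (ι → ℝ) → ℝ} {d : ℕ} {c : ℝ}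

lemma posSublevel_pow_mul (hf : ∀ y, f (c • y) = c ^ d * f y) (hc : 0 < c) (x : ℝ) :
    posSublevel f (c ^ d * x) = c • posSublevel f x := by
  ext y
  have hfy : f y = c ^ d * f (c⁻¹ • y) := by rw [← hf, smul_inv_smul₀ hc.ne']
  rw [Set.mem_smul_set_iff_inv_smul_mem₀ hc.ne']
  refine and_congr (forall_congr' fun i => ?_) ?_
  · simp [hc]
  · rw [hfy, mul_le_mul_iff_right₀ (pow_pos hc d)]

lemma volume_posSublevel_pow_mul [Fintype ι] (hf : ∀ y, f (c • y) = c ^ d * f y) (hc : 0 < c)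
    (x : ℝ) :
    (volume (posSublevel f (c ^ d * x))).toReal =
      c ^ Fintype.card ι * (volume (posSublevel f x)).toReal := by
  rw [posSublevel_pow_mul hf hc, Measure.addHaar_smul_of_nonneg volume hc.le,
    Module.finrank_fintype_fun_eq_card, ENNReal.toReal_mul,
    ENNReal.toReal_ofReal (pow_nonneg hc.le _)]

end Homogeneous

section FiniteSums

lemma two_nsmul_sum_filter_fst_le_snd {ι M : Type*} [Fintype ι] [LinearOrder ι] [AddCommMonoid M]
    (f : ι → ι → M) (hf : ∀ a b, f a b = f b a) :
    2 • ∑ p : ι × ι with p.1 ≤ p.2, f p.1 p.2 = ∑ a, ∑ b, f a b + ∑ a, f a a := by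
  have h_le : ∑ p : ι × ι with p.1 ≤ p.2, f p.1 p.2 = ∑ a, ∑ b, if a ≤ b then f a b else 0 := by
    rw [sum_filter, Fintype.sum_prod_type]
  have h_ge : ∑ a, ∑ b, (if a ≤ b then f a b else 0) = ∑ a, ∑ b, if b ≤ a then f a b else 0 := by
    rw [sum_comm]
    simp only [hf]
  have h_diag : ∑ a, f a a = ∑ a, ∑ b, if a = b then f a b else 0 := by simp
  rw [two_nsmul, h_le]
  nth_rewrite 2 [h_ge]
  simp only [h_diag, ← sum_add_distrib]
  refine sum_congr rfl fun a _ => sum_congr rfl fun b _ => ?_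
  rcases lt_trichotomy a b with h | rfl | h
  · simp [h.le, h.ne, h.not_ge]
  · simp
  · simp [h.le, h.ne', h.not_ge]

lemma card_filter_fst_le_snd (r : ℕ) : #{p : Fin r × Fin r | p.1 ≤ p.2} = r * (r + 1) / 2 := by
  have h := two_nsmul_sum_filter_fst_le_snd (ι := Fin r) (fun _ _ => 1) fun _ _ => rfl
  simp only [sum_const, card_univ, Fintype.card_fin, smul_eq_mul, mul_one] at h
  rw [mul_add_one, ← h, Nat.mul_div_cancel_left _ two_pos]

variable {ι 𝕜 : Type*} [Field 𝕜] [LinearOrder 𝕜] [IsStrictOrderedRing 𝕜] (s : Finset ι)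
  (w : ι → 𝕜)

lemma card_mul_sum_abs_sub_le_sum_sum_abs_sub :
    #s * ∑ a ∈ s, |w a| - #s * |∑ a ∈ s, w a| ≤ ∑ a ∈ s, ∑ b ∈ s, |w a - w b| := by
  have row (a : ι) : #s * |w a| - |∑ b ∈ s, w b| ≤ ∑ b ∈ s, |w a - w b| :=
    calc #s * |w a| - |∑ b ∈ s, w b|
        = |#s * w a| - |∑ b ∈ s, w b| := by rw [abs_mul, Nat.abs_cast]
      _ ≤ |#s * w a - ∑ b ∈ s, w b| := abs_sub_abs_le_abs_sub _ _
      _ = |∑ b ∈ s, (w a - w b)| := by rw [sum_sub_distrib, sum_const, nsmul_eq_mul]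
      _ ≤ ∑ b ∈ s, |w a - w b| := abs_sum_le_sum_abs _ _
  simpa only [sum_sub_distrib, sum_const, nsmul_eq_mul, ← mul_sum] using
    sum_le_sum fun a (_ : a ∈ s) => row a

lemma sum_sum_max_eq_s2 :
    ∑ a ∈ s, ∑ b ∈ s, max (w a) (w b) =
      #s * ∑ a ∈ s, w a + (∑ a ∈ s, ∑ b ∈ s, |w a - w b|) / 2 := by
  have max_eq (a b : ι) : max (w a) (w b) = (w a + w b + |w a - w b|) / 2 := by
    rw [← max_sub_min_eq_abs', ← max_add_min (w a) (w b)]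
    ring
  simp only [max_eq, ← sum_div, sum_add_distrib, sum_const, nsmul_eq_mul, ← mul_sum]
  ring

lemma sum_sum_max_sub_const (T : 𝕜) :
    ∑ a ∈ s, ∑ b ∈ s, max (w a - T) (w b - T) =
      ∑ a ∈ s, ∑ b ∈ s, max (w a) (w b) - #s ^ 2 * T := by
  simp only [max_sub_sub_right, sum_sub_distrib, sum_const, nsmul_eq_mul]
  ring

lemma add_sum_sum_max_erase_le [Fintype ι] [DecidableEq ι] (i : ι) :
    w i + 2 * ∑ a ∈ univ.erase i, w a +
        ∑ a ∈ univ.erase i, ∑ b ∈ univ.erase i, max (w a) (w b) ≤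
      ∑ a, ∑ b, max (w a) (w b) := by
  have hcol : ∑ a ∈ univ.erase i, w a ≤ ∑ a ∈ univ.erase i, max (w a) (w i) :=
    sum_le_sum fun _ _ => le_max_left _ _
  have hrow : ∑ b ∈ univ.erase i, w b ≤ ∑ b ∈ univ.erase i, max (w i) (w b) :=
    sum_le_sum fun _ _ => le_max_right _ _
  simp only [← add_sum_erase univ _ (mem_univ i), sum_add_distrib, max_self]
  linarith

lemma sum_add_sum_abs_div_le {L : 𝕜} (hL : 0 ≤ L)
    (h : 3 * ∑ a ∈ s, w a + ∑ a ∈ s, ∑ b ∈ s, max (w a) (w b) ≤ 2 * L) :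
    ∑ a ∈ s, w a + (∑ a ∈ s, |w a|) / 9 ≤ 2 / 3 * L := by
  rcases s.eq_empty_or_nonempty with rfl | hs
  · simpa using hL
  have card_pos : (1 : 𝕜) ≤ #s := by exact_mod_cast hs.card_pos
  have habs := card_mul_sum_abs_sub_le_sum_sum_abs_sub s w
  have hA : 0 ≤ ∑ a ∈ s, |w a| := sum_nonneg fun _ _ => abs_nonneg _
  rw [sum_sum_max_eq_s2] at h
  set n := (#s : 𝕜)
  set S := ∑ a ∈ s, w a
  set A := ∑ a ∈ s, |w a|
  rcases le_total S 0 with hS | hS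
  · have hle : (3 * n + 6) * S + n * A ≤ 4 * L := by
      rw [abs_of_nonpos hS] at habs
      linarith
    refine le_of_mul_le_mul_left ?_ (by linarith : 0 < 3 * n + 6)
    nlinarith
  · have hle : (n + 6) * S + n * A ≤ 4 * L := by
      rw [abs_of_nonneg hS] at habs
      linarith
    refine le_of_mul_le_mul_left ?_ (by linarith : 0 < n + 6)
    nlinarith

lemma sum_erase_sub_add_sum_abs_div_le [Fintype ι] [DecidableEq ι] {T : 𝕜} (hT : 0 ≤ T)
    (h : ∑ a, ∑ b, max (w a) (w b) + ∑ a, w a ≤ Fintype.card ι ^ 2 * T) {i : ι} (hi : w i ≤ 0) :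
    ∑ j ∈ univ.erase i, (w j - T) + (∑ j ∈ univ.erase i, |w j - T|) / 9 ≤ 2 / 3 * -w i := by
  rcases (univ.erase i).eq_empty_or_nonempty with hJ | hJ
  · rw [hJ, sum_empty, sum_empty]
    linarith
  refine sum_add_sum_abs_div_le _ (fun j => w j - T) (neg_nonneg.2 hi) ?_
  have card_pos : (1 : 𝕜) ≤ #(univ.erase i) := by exact_mod_cast hJ.card_pos
  have hcard : (Fintype.card ι : 𝕜) = #(univ.erase i) + 1 := by
    exact_mod_cast (card_erase_add_one (mem_univ i)).symm
  have herase := add_sum_sum_max_erase_le w i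
  rw [← add_sum_erase univ w (mem_univ i), hcard] at h
  have hsq : ((#(univ.erase i) : 𝕜) + 1) ^ 2 * T ≤
      #(univ.erase i) ^ 2 * T + 3 * (#(univ.erase i) * T) := by
    nlinarith
  rw [sum_sum_max_sub_const, sum_sub_distrib, sum_const, nsmul_eq_mul]
  linarith

end FiniteSums

section HPoly

variable {r : ℕ} {y : Fin r → ℝ}

lemma hpoly_monotoneOn : MonotoneOn (hpoly r) (Set.Ici 0) := fun _ hy _ _ hyz =>
  prod_le_prod (fun _ _ => sum_nonneg fun i _ => hy i) fun _ _ => sum_le_sum fun i _ => hyz i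

lemma hpoly_monotoneOn_pos : MonotoneOn (hpoly r) {y | ∀ i, 0 < y i} :=
  hpoly_monotoneOn.mono fun _ hy i => (hy i).le

lemma hpoly_smul (c : ℝ) (y : Fin r → ℝ) :
    hpoly r (c • y) = c ^ (r * (r + 1) / 2) * hpoly r y := by
  simp only [hpoly, Pi.smul_apply, smul_eq_mul, ← mul_sum, prod_mul_distrib, prod_const,
    card_filter_fst_le_snd]

lemma sum_Icc_pos (hy : ∀ i, 0 < y i) {a b : Fin r} (hab : a ≤ b) : 0 < ∑ i ∈ Icc a b, y i :=
  sum_pos (fun i _ => hy i) (nonempty_Icc.2 hab)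

lemma hpoly_pos (hy : ∀ i, 0 < y i) : 0 < hpoly r y :=
  prod_pos fun _ hp => sum_Icc_pos hy (mem_filter.1 hp).2

lemma sum_max_log_le_log_hpoly (hy : ∀ i, 0 < y i) :
    ∑ p : Fin r × Fin r with p.1 ≤ p.2, max (Real.log (y p.1)) (Real.log (y p.2)) ≤
      Real.log (hpoly r y) := by
  rw [hpoly, Real.log_prod fun p hp => (sum_Icc_pos hy (mem_filter.1 hp).2).ne']
  refine sum_le_sum fun p hp => ?_
  have hp : p.1 ≤ p.2 := (mem_filter.1 hp).2
  have log_le {j : Fin r} (hj : j ∈ Icc p.1 p.2) :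
      Real.log (y j) ≤ Real.log (∑ i ∈ Icc p.1 p.2, y i) :=
    Real.log_le_log (hy j) (single_le_sum (f := y) (fun i _ => (hy i).le) hj)
  exact max_le (log_le (left_mem_Icc.2 hp)) (log_le (right_mem_Icc.2 hp))

lemma sum_sum_max_log_add_sum_log_le (hy : ∀ i, 0 < y i) :
    ∑ a, ∑ b, max (Real.log (y a)) (Real.log (y b)) + ∑ a, Real.log (y a) ≤
      2 * Real.log (hpoly r y) := by
  have h := two_nsmul_sum_filter_fst_le_snd (fun a b => max (Real.log (y a)) (Real.log (y b)))
    fun _ _ => max_comm _ _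
  simp only [max_self, nsmul_eq_mul, Nat.cast_ofNat] at h
  linarith [sum_max_log_le_log_hpoly hy]

lemma le_hpoly_of_one_le (hy : ∀ i, 1 ≤ y i) (i : Fin r) : y i ≤ hpoly r y := by
  have y_pos (j : Fin r) : 0 < y j := zero_lt_one.trans_le (hy j)
  refine (Real.log_le_log_iff (y_pos i) (hpoly_pos y_pos)).1 ?_
  calc Real.log (y i)
      = max (Real.log (y (i, i).1)) (Real.log (y (i, i).2)) := (max_self _).symm
    _ ≤ ∑ p : Fin r × Fin r with p.1 ≤ p.2, max (Real.log (y p.1)) (Real.log (y p.2)) :=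
        single_le_sum (f := fun p : Fin r × Fin r => max (Real.log (y p.1)) (Real.log (y p.2)))
          (fun p _ => le_max_of_le_left (Real.log_nonneg (hy p.1))) (by simp)
    _ ≤ Real.log (hpoly r y) := sum_max_log_le_log_hpoly y_pos

lemma natCast_le_of_mem_natSublevel_hpoly {x : ℝ} {k : Fin r → ℕ}
    (hk : k ∈ natSublevel (hpoly r) x) (i : Fin r) : (k i : ℝ) ≤ x :=
  (le_hpoly_of_one_le (fun j => by exact_mod_cast hk.1 j) i).trans hk.2

lemma finite_natSublevel_hpoly (r : ℕ) (x : ℝ) : (natSublevel (hpoly r) x).Finite :=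
  (Set.Finite.pi' fun _ => Set.finite_Iic ⌊x⌋₊).subset fun _ hk i =>
    Nat.le_floor (natCast_le_of_mem_natSublevel_hpoly hk i)

lemma natSublevel_hpoly_eq_empty (hr : 1 ≤ r) {x : ℝ} (hx : x < 1) :
    natSublevel (hpoly r) x = ∅ := by
  refine Set.eq_empty_of_forall_notMem fun k hk => ?_
  have hk₀ : (1 : ℝ) ≤ k ⟨0, hr⟩ := by exact_mod_cast hk.1 ⟨0, hr⟩
  linarith [natCast_le_of_mem_natSublevel_hpoly hk ⟨0, hr⟩]

lemma volume_posSublevel_hpoly (hr : 1 ≤ r) {x : ℝ} (hx : 0 < x) :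
    (volume (posSublevel (hpoly r) x)).toReal =
      (volume (posSublevel (hpoly r) 1)).toReal * x ^ ((2 : ℝ) / (r + 1)) := by
  set c := x ^ (2 / ((r : ℝ) * (r + 1))) with hc
  have hc_degree : c ^ (r * (r + 1) / 2) = x := by
    rw [hc, ← Real.rpow_mul_natCast hx.le,
      Nat.cast_div (even_iff_two_dvd.1 (Nat.even_mul_succ_self r)) two_ne_zero]
    convert Real.rpow_one x using 2
    push_cast
    field_simp
  have hc_card : c ^ r = x ^ ((2 : ℝ) / (r + 1)) := by
    rw [hc, ← Real.rpow_mul_natCast hx.le]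
    congr 1
    field_simp
  have h := volume_posSublevel_pow_mul (hpoly_smul (r := r) c) (Real.rpow_pos_of_pos hx _) 1
  rw [hc_degree, mul_one, Fintype.card_fin, hc_card] at h
  rw [h, mul_comm]

end HPoly

section Weights

/-- The function `v ^ (-2 / 3)` on `(0, 1]`, extended by zero: the integrable weight put on the
coordinate that is at most `1`. -/
noncomputable def edgeWeight : ℝ → ℝ :=
  (Set.Ioc 0 1).indicator fun v => Real.exp (2 / 3 * -Real.log v)

/-- The function equal to `v ^ (-8 / 9)` on `(0, 1]` and to `v ^ (-10 / 9)` on `(1, ∞)`, extended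
by zero: the integrable weight put, after dilation, on the remaining coordinates. -/
noncomputable def bulkWeight : ℝ → ℝ :=
  (Set.Ioi 0).indicator fun v => Real.exp (-(Real.log v + |Real.log v| / 9))

lemma edgeWeight_nonneg : 0 ≤ edgeWeight :=
  Set.indicator_nonneg fun _ _ => (Real.exp_pos _).le

lemma bulkWeight_nonneg : 0 ≤ bulkWeight :=
  Set.indicator_nonneg fun _ _ => (Real.exp_pos _).le

lemma integrableOn_Ioc_rpow {s t : ℝ} (hs : -1 < s) (ht : 0 < t) :
    IntegrableOn (fun v : ℝ => v ^ s) (Set.Ioc 0 t) := by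
  rw [integrableOn_Ioc_iff_integrableOn_Ioo, intervalIntegral.integrableOn_Ioo_rpow_iff ht]
  exact hs

lemma integrable_edgeWeight : Integrable edgeWeight := by
  refine (integrable_indicator_iff measurableSet_Ioc).2 <|
    (integrableOn_Ioc_rpow (s := -2 / 3) (by norm_num) one_pos).congr_fun (fun v hv => ?_)
      measurableSet_Ioc
  dsimp only
  rw [Real.rpow_def_of_pos hv.1]
  ring_nf

lemma integrable_bulkWeight : Integrable bulkWeight := by
  refine (integrable_indicator_iff measurableSet_Ioi).2 ?_
  rw [← Set.Ioc_union_Ioi_eq_Ioi (zero_le_one (α := ℝ))]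
  refine IntegrableOn.union ?_ ?_
  · refine (integrableOn_Ioc_rpow (s := -8 / 9) (by norm_num) one_pos).congr_fun (fun v hv => ?_)
      measurableSet_Ioc
    dsimp only
    rw [Real.rpow_def_of_pos hv.1, abs_of_nonpos (Real.log_nonpos hv.1.le hv.2)]
    ring_nf
  · refine (integrableOn_Ioi_rpow_of_lt (a := -10 / 9) (by norm_num) one_pos).congr_fun
      (fun v hv => ?_) measurableSet_Ioi
    have hv : 1 < v := hv
    dsimp only
    rw [Real.rpow_def_of_pos (one_pos.trans hv), abs_of_nonneg (Real.log_nonneg hv.le)]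
    ring_nf

lemma edgeWeight_mul_prod_bulkWeight {ι : Type*} {s : Finset ι} {i : ι} {y : ι → ℝ}
    (hy : ∀ j, 0 < y j) (hi : y i ≤ 1) {τ : ℝ} (hτ : 0 < τ) :
    edgeWeight (y i) * ∏ j ∈ s, bulkWeight (y j / τ) =
      Real.exp (2 / 3 * -Real.log (y i) -
        (∑ j ∈ s, (Real.log (y j) - Real.log τ) +
          (∑ j ∈ s, |Real.log (y j) - Real.log τ|) / 9)) := by
  have hbulk (j : ι) : bulkWeight (y j / τ) =
      Real.exp (-((Real.log (y j) - Real.log τ) + |Real.log (y j) - Real.log τ| / 9)) := by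
    rw [bulkWeight, Set.indicator_of_mem (Set.mem_Ioi.2 (div_pos (hy j) hτ)),
      Real.log_div (hy j).ne' hτ.ne']
  rw [edgeWeight, Set.indicator_of_mem (Set.mem_Ioc.2 ⟨hy i, hi⟩)]
  simp only [hbulk]
  rw [← Real.exp_sum, ← Real.exp_add, sum_neg_distrib, sum_add_distrib, ← sum_div, sub_eq_add_neg]

end Weights

section StripVolume

lemma measure_pi_le_ofReal_prod_integral {ι : Type*} [Fintype ι] {E : ι → Type*}
    [∀ i, MeasurableSpace (E i)] {μ : ∀ i, Measure (E i)} [∀ i, SigmaFinite (μ i)]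
    {f : ∀ i, E i → ℝ} (hf : ∀ i, Integrable (f i) (μ i)) (hf₀ : ∀ i, 0 ≤ f i)
    {S : Set (∀ i, E i)} (hS : ∀ y ∈ S, 1 ≤ ∏ i, f i (y i)) :
    Measure.pi μ S ≤ ENNReal.ofReal (∏ i, ∫ v, f i v ∂μ i) := by
  have hint : Integrable (fun y : ∀ i, E i => ∏ i, f i (y i)) (Measure.pi μ) :=
    Integrable.fintype_prod_dep hf
  rw [← integral_fintype_prod_eq_prod, ofReal_integral_eq_lintegral_ofReal hint
    (.of_forall fun y => prod_nonneg fun i _ => hf₀ i _)]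
  calc Measure.pi μ S
      ≤ Measure.pi μ {y | 1 ≤ ENNReal.ofReal (∏ i, f i (y i))} :=
        measure_mono fun y hy => ENNReal.one_le_ofReal.2 (hS y hy)
    _ = 1 * Measure.pi μ {y | 1 ≤ ENNReal.ofReal (∏ i, f i (y i))} := (one_mul _).symm
    _ ≤ ∫⁻ y, ENNReal.ofReal (∏ i, f i (y i)) ∂Measure.pi μ :=
        mul_meas_ge_le_lintegral₀ hint.aemeasurable.ennreal_ofReal 1

lemma volume_le_of_one_le_edgeWeight_mul_prod {ι : Type*} [Fintype ι] [DecidableEq ι] (i : ι)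
    {τ : ℝ} (hτ : 0 < τ) {S : Set (ι → ℝ)}
    (hS : ∀ y ∈ S, 1 ≤ edgeWeight (y i) * ∏ j ∈ univ.erase i, bulkWeight (y j / τ)) :
    volume S ≤ ENNReal.ofReal
      ((∫ v, edgeWeight v) * (τ * ∫ v, bulkWeight v) ^ (Fintype.card ι - 1)) := by
  let f (j : ι) : ℝ → ℝ := if j = i then edgeWeight else fun v => bulkWeight (v / τ)
  have f_self : f i = edgeWeight := if_pos rfl
  have f_of_mem {j : ι} (hj : j ∈ univ.erase i) : f j = fun v => bulkWeight (v / τ) :=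
    if_neg (ne_of_mem_erase hj)
  have hf (j : ι) : Integrable (f j) ∧ 0 ≤ f j := by
    by_cases hj : j = i
    · simpa only [hj, f_self] using ⟨integrable_edgeWeight, edgeWeight_nonneg⟩
    · rw [f_of_mem (mem_erase.2 ⟨hj, mem_univ j⟩)]
      exact ⟨integrable_bulkWeight.comp_div hτ.ne', fun v => bulkWeight_nonneg (v / τ)⟩
  have prod_integral : ∏ j, ∫ v, f j v =
      (∫ v, edgeWeight v) * (τ * ∫ v, bulkWeight v) ^ (Fintype.card ι - 1) := by
    have integral_f {j : ι} (hj : j ∈ univ.erase i) : ∫ v, f j v = τ * ∫ v, bulkWeight v := by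
      rw [f_of_mem hj, Measure.integral_comp_div bulkWeight, abs_of_pos hτ, smul_eq_mul]
    rw [← mul_prod_erase univ _ (mem_univ i), f_self, prod_congr rfl fun j => integral_f,
      prod_const, card_erase_of_mem (mem_univ i), card_univ]
  rw [← prod_integral]
  refine measure_pi_le_ofReal_prod_integral (fun j => (hf j).1) (fun j => (hf j).2) fun y hy => ?_
  rw [← mul_prod_erase univ _ (mem_univ i), f_self,
    prod_congr rfl fun j hj => congrFun (f_of_mem hj) (y j)]
  exact hS y hy

/-- The constant in the volume bound for a strip of the region `h_r ≤ x`. -/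
noncomputable def stripConst (r : ℕ) : ℝ :=
  (∫ v, edgeWeight v) * (∫ v, bulkWeight v) ^ (r - 1)

lemma stripConst_nonneg (r : ℕ) : 0 ≤ stripConst r :=
  mul_nonneg (integral_nonneg edgeWeight_nonneg) (pow_nonneg (integral_nonneg bulkWeight_nonneg) _)

lemma volume_posSublevel_hpoly_strip_le {r : ℕ} {x : ℝ} (hx : 1 ≤ x) (i : Fin r) :
    volume {y ∈ posSublevel (hpoly r) x | y i ≤ 1} ≤
      ENNReal.ofReal (stripConst r * x ^ ((2 * ((r : ℝ) - 1)) / (r : ℝ) ^ 2)) := by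
  have hx₀ : 0 < x := one_pos.trans_le hx
  have hr : 1 ≤ r := i.pos
  set τ := x ^ (2 / (r : ℝ) ^ 2) with hτ
  have τ_pos : 0 < τ := Real.rpow_pos_of_pos hx₀ _
  have τ_pow : τ ^ (r - 1) = x ^ ((2 * ((r : ℝ) - 1)) / (r : ℝ) ^ 2) := by
    rw [hτ, ← Real.rpow_mul_natCast hx₀.le, Nat.cast_sub hr, Nat.cast_one, div_mul_eq_mul_div]
  have log_τ : (r : ℝ) ^ 2 * Real.log τ = 2 * Real.log x := by
    rw [hτ, Real.log_rpow hx₀]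
    field_simp
  have log_τ_nonneg : 0 ≤ Real.log τ := Real.log_nonneg (Real.one_le_rpow hx (by positivity))
  have hvol := volume_le_of_one_le_edgeWeight_mul_prod i τ_pos
    (S := {y ∈ posSublevel (hpoly r) x | y i ≤ 1}) fun y ⟨⟨hy, hyx⟩, hi⟩ => by
      rw [edgeWeight_mul_prod_bulkWeight hy hi τ_pos, Real.one_le_exp_iff, sub_nonneg]
      refine sum_erase_sub_add_sum_abs_div_le (fun j => Real.log (y j)) log_τ_nonneg ?_
        (Real.log_nonpos (hy i).le hi)
      rw [Fintype.card_fin, log_τ]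
      linarith [sum_sum_max_log_add_sum_log_le hy, Real.log_le_log (hpoly_pos hy) hyx]
  refine hvol.trans_eq ?_
  rw [Fintype.card_fin, mul_pow, τ_pow, stripConst]
  ring_nf

end StripVolume

section Counting

variable {r : ℕ} {x : ℝ}

lemma abs_ncard_natSublevel_hpoly_sub_le_of_lt_one (hr : 1 ≤ r) (hx₀ : 0 < x) (hx : x < 1) :
    |((natSublevel (hpoly r) x).ncard : ℝ) -
        (volume (posSublevel (hpoly r) 1)).toReal * x ^ ((2 : ℝ) / (r + 1))| ≤
      (volume (posSublevel (hpoly r) 1)).toReal * x ^ ((2 * ((r : ℝ) - 1)) / (r : ℝ) ^ 2) := by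
  have exponent_le : (2 * ((r : ℝ) - 1)) / (r : ℝ) ^ 2 ≤ 2 / (r + 1) := by
    rw [div_le_div_iff₀ (by positivity) (by positivity)]
    nlinarith
  rw [natSublevel_hpoly_eq_empty hr hx, Set.ncard_empty, Nat.cast_zero, zero_sub, abs_neg,
    abs_of_nonneg (by positivity)]
  gcongr ?_ * ?_
  exact Real.rpow_le_rpow_of_exponent_ge hx₀ hx.le exponent_le

lemma abs_ncard_natSublevel_hpoly_sub_le_of_one_le (hr : 1 ≤ r) (hx : 1 ≤ x) :
    |((natSublevel (hpoly r) x).ncard : ℝ) -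
        (volume (posSublevel (hpoly r) 1)).toReal * x ^ ((2 : ℝ) / (r + 1))| ≤
      r * stripConst r * x ^ ((2 * ((r : ℝ) - 1)) / (r : ℝ) ^ 2) := by
  rw [← volume_posSublevel_hpoly hr (one_pos.trans_le hx), mul_assoc]
  simpa only [Fintype.card_fin] using
    abs_ncard_natSublevel_sub_volume_le hpoly_monotoneOn_pos (finite_natSublevel_hpoly r x)
      (mul_nonneg (stripConst_nonneg r) (by positivity))
      (volume_posSublevel_hpoly_strip_le hx)

end Counting

/-- Lemma 2.3: `#{k ∈ ℕ^r : h_r(k) ≤ x} = I_r x^{2/(r+1)} + O_r(x^{2(r-1)/r²})`. -/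
theorem stmt2 (r : ℕ) (hr : 1 ≤ r) :
    ∃ C : ℝ, ∀ x : ℝ, 0 < x →
      |({k : Fin r → ℕ | (∀ i, 0 < k i) ∧ hpoly r (fun i => (k i : ℝ)) ≤ x}.ncard : ℝ)
          - (volume {y : Fin r → ℝ | (∀ i, 0 < y i) ∧ hpoly r y ≤ 1}).toReal
              * x ^ ((2 : ℝ) / (r + 1))|
        ≤ C * x ^ ((2 * ((r : ℝ) - 1)) / (r : ℝ) ^ 2) := by
  refine ⟨max (volume (posSublevel (hpoly r) 1)).toReal (r * stripConst r), fun x hx₀ => ?_⟩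
  have hpow : 0 ≤ x ^ ((2 * ((r : ℝ) - 1)) / (r : ℝ) ^ 2) := Real.rpow_nonneg hx₀.le _
  rcases lt_or_ge x 1 with hx | hx
  · exact (abs_ncard_natSublevel_hpoly_sub_le_of_lt_one hr hx₀ hx).trans
      (mul_le_mul_of_nonneg_right (le_max_left _ _) hpow)
  · exact (abs_ncard_natSublevel_hpoly_sub_le_of_one_le hr hx).trans
      (mul_le_mul_of_nonneg_right (le_max_right _ _) hpow)
end

section
/- Let r ∈ ℕ with r ≥ 2 and 0 < ε ≤ 1/32, and set ν_r := r(r+1)/2. For any integer N ≥ 4 and real θ with ε·N^{−ν_r} ≤ θ ≤ 1/2, one has Σ_{k ∈ Λ_{N,r}} sin²(π θ a_r(k)) ≥ C_{r,ε}·N^r, where C_{r,ε} := sin²(2^{−ν_r} π ε)/32 and Λ_{N,r} := {k ∈ ℤ^r : N ≤ k_j ≤ (j+2)N}. -/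
open Finset Real

/-- `c_r = r!(r-1)!⋯1!`. -/
def crconst (r : ℕ) : ℕ := ∏ i ∈ Finset.range r, Nat.factorial (i + 1)

/-- The Weyl dimension polynomial `a_r(k) = h_r(k)/c_r`. -/
noncomputable def apoly (r : ℕ) (y : Fin r → ℝ) : ℝ := hpoly r y / crconst r

/-!
Say that `x` is good at scale `δ` if it lies at distance at least `δ` from `ℤ`, and small if
`x < δ`. Give good values weight `1` and small values weight `1 / 32`. By induction on `m`, the
values `θ * a_m(k)`, `k ∈ Λ_{N,m}`, have total weight at least `N ^ m / 32` at scale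
`ε / 2 ^ ν_m`. For `m = r` no value is small, since `θ * a_r(k) ≥ ε`, and a good value contributes
at least `sin² (π ε / 2 ^ ν_r)`.

In the inductive step all coordinates but the last are fixed, and `θ * a_{m+1}` becomes a
polynomial `f` of degree `d = m + 1` in the last one, with constant `d`-th difference `θ * a_m`.
If `Δ^i f u` is good at scale `2 ^ i * η`, then one of `f u, …, f (u + i)` is good at scale `η`.
So a good `Δ^d f` produces a good value of `f` in every window of length `d + 1`. If `Δ^d f` is
small instead, consider for each `u` the last `i` with `Δ^i f u ≥ 2 ^ i * η`. As `u` grows,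
`Δ^i f` moves by steps below `2 ^ (i + 1) * η`, hence cannot remain near a positive integer
forever. This is measured by a potential which rises by at most `1` per step and drops by at least
`1` at each `u` where `Δ^i f u` is near an integer, so that about half of the `u` are not of this
kind.
-/

open scoped fwdDiff

theorem norm_coe_unitAddCircle_le_abs_sub_intCast (x : ℝ) (n : ℤ) :
    ‖(x : UnitAddCircle)‖ ≤ |x - n| :=
  UnitAddCircle.norm_eq.trans_le (round_le x n)

theorem le_norm_coe_unitAddCircle {δ x : ℝ} (h : δ ≤ x) (h' : x ≤ 1 - δ) :
    δ ≤ ‖(x : UnitAddCircle)‖ := by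
  rw [UnitAddCircle.norm_eq]
  rcases le_or_gt (round x) 0 with hn | hn
  · have : (round x : ℝ) ≤ 0 := by exact_mod_cast hn
    exact le_trans (by linarith) (le_abs_self _)
  · have : (1 : ℝ) ≤ round x := by exact_mod_cast hn
    exact le_trans (by linarith) (neg_le_abs _)

theorem sin_pi_mul_norm_sq (x : ℝ) : sin (π * ‖(x : UnitAddCircle)‖) ^ 2 = sin (π * x) ^ 2 := by
  have sin_abs_sq (y : ℝ) : sin (π * |y|) ^ 2 = sin (π * y) ^ 2 := by
    rcases abs_choice y with h | h <;> simp [h]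
  rw [UnitAddCircle.norm_eq, sin_abs_sq, mul_sub, mul_comm π (round x : ℝ), sin_sub_int_mul_pi,
    mul_pow, ← zpow_natCast, zpow_comm]
  simp

theorem sin_sq_le_sin_sq_of_le_norm {δ x : ℝ} (hδ : 0 ≤ δ) (hx : δ ≤ ‖(x : UnitAddCircle)‖) :
    sin (π * δ) ^ 2 ≤ sin (π * x) ^ 2 := by
  have h_half : ‖(x : UnitAddCircle)‖ ≤ 1 / 2 := by
    simpa using AddCircle.norm_le_half_period (1 : ℝ) (x := (x : UnitAddCircle)) one_ne_zero
  have hπ := pi_pos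
  rw [← sin_pi_mul_norm_sq x]
  refine pow_le_pow_left₀ (sin_nonneg_of_nonneg_of_le_pi (by positivity) (by nlinarith)) ?_ 2
  exact sin_le_sin_of_le_of_le_pi_div_two (by nlinarith) (by nlinarith) (by gcongr)

theorem fwdDiff_iter_map {M G H : Type*} [AddCommMonoid M] [AddCommGroup G] [AddCommGroup H]
    (φ : G →+ H) (f : M → G) (h : M) (i : ℕ) :
    Δ_[h] ^[i] (φ ∘ f) = φ ∘ Δ_[h] ^[i] f := by
  have h_semiconj : Function.Semiconj (φ ∘ · : (M → G) → M → H) Δ_[h] Δ_[h] := fun g ↦ by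
    ext u; simp [fwdDiff]
  exact (h_semiconj.iterate_right i f).symm

theorem exists_le_norm_of_le_norm_fwdDiff_iter {M E : Type*} [AddCommMonoid M]
    [SeminormedAddCommGroup E] {g : M → E} {h : M} {δ : ℝ} (i : ℕ) (u : M)
    (hi : 2 ^ i * δ ≤ ‖Δ_[h] ^[i] g u‖) : ∃ j ≤ i, δ ≤ ‖g (u + j • h)‖ := by
  induction i generalizing u with
  | zero => exact ⟨0, le_rfl, by simpa using hi⟩
  | succ i ih =>
    have h_triangle : ‖Δ_[h] ^[i + 1] g u‖ ≤ ‖Δ_[h] ^[i] g (u + h)‖ + ‖Δ_[h] ^[i] g u‖ := by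
      rw [Function.iterate_succ_apply']
      exact norm_sub_le _ _
    rw [pow_succ] at hi
    rcases le_or_gt (2 ^ i * δ) ‖Δ_[h] ^[i] g u‖ with hu | hu
    · obtain ⟨j, hj, hδ⟩ := ih u hu
      exact ⟨j, hj.trans i.le_succ, hδ⟩
    · obtain ⟨j, hj, hδ⟩ := ih (u + h) (by linarith)
      exact ⟨j + 1, Nat.succ_le_succ hj, by rwa [succ_nsmul', ← add_assoc]⟩

theorem card_le_mul_card_of_exists_mem_Ico {s t : Finset ℕ} (d : ℕ)
    (h : ∀ u ∈ s, ∃ v ∈ t, u ≤ v ∧ v < u + d) : #s ≤ d * #t := by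
  choose! φ hφt hφ_ge hφ_lt using h
  refine card_le_mul_card_image_of_maps_to hφt d fun v _ ↦ ?_
  have h_fiber : {u ∈ s | φ u = v} ⊆ Icc (v + 1 - d) v := fun u hu ↦ by
    obtain ⟨hus, rfl⟩ := mem_filter.1 hu
    have := hφ_ge u hus
    have := hφ_lt u hus
    rw [mem_Icc]
    lia
  refine (card_le_card h_fiber).trans ?_
  rw [Nat.card_Icc]
  lia

theorem le_two_mul_card_filter_range_add {p : ℕ → ℝ} {P : ℕ → Prop} [DecidablePred P]
    (h_up : ∀ u, p (u + 1) ≤ p u + 1) (h_down : ∀ u, ¬ P u → p (u + 1) ≤ p u - 1) (M : ℕ) :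
    M + p M ≤ 2 * #{u ∈ range M | P u} + p 0 := by
  induction M with
  | zero => simp
  | succ M ih =>
    rw [range_add_one, filter_insert]
    split_ifs with hM
    · rw [card_insert_of_notMem (by simp)]
      push_cast
      linarith [h_up M]
    · push_cast
      linarith [h_down M hM]

/-- The weight of `x` at scale `δ`: good values, at distance at least `δ` from `ℤ`, weigh `1`, and
small values `x < δ` weigh `1 / 32`; values near a positive integer weigh nothing. This is the
quantity whose sum over the box is bounded below by induction on the number of coordinates. -/
noncomputable def weight (δ x : ℝ) : ℝ :=
  (if δ ≤ ‖(x : UnitAddCircle)‖ then 1 else 0) + (if x < δ then 1 / 32 else 0)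

theorem weight_of_le_norm {δ x : ℝ} (hx : 0 ≤ x) (h : δ ≤ ‖(x : UnitAddCircle)‖) :
    weight δ x = 1 := by
  have h_le : δ ≤ x := by
    simpa [abs_of_nonneg hx] using h.trans (norm_coe_unitAddCircle_le_abs_sub_intCast x 0)
  simp [weight, h, h_le.not_gt]

theorem sin_sq_mul_weight_le {δ x : ℝ} (hδ : 0 ≤ δ) (hx : δ ≤ x) :
    sin (π * δ) ^ 2 * weight δ x ≤ sin (π * x) ^ 2 := by
  rw [weight, if_neg hx.not_gt, add_zero]
  split_ifs with h_good
  · rw [mul_one]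
    exact sin_sq_le_sin_sq_of_le_norm hδ h_good
  · rw [mul_zero]
    positivity

theorem sum_weight_eq {ι : Type*} (s : Finset ι) (δ : ℝ) (g : ι → ℝ) :
    ∑ k ∈ s, weight δ (g k) =
      #{k ∈ s | δ ≤ ‖(g k : UnitAddCircle)‖} + #{k ∈ s | g k < δ} / 32 := by
  simp only [weight, sum_add_distrib, ← sum_filter, sum_const, nsmul_eq_mul]
  ring

/-- A `1`-Lipschitz bump at each positive integer `n`. Its peak is shifted to `n - δ`, so that it
decreases with slope `-1` on `[n - δ, n + 3 * δ]`: this covers a step of length at most `2 * δ`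
that starts within `δ` of `n`. Replacing `x` by `max x (1 / 2)` removes the bump at `0`. -/
noncomputable def intBump (δ x : ℝ) : ℝ :=
  max 0 (4 * δ - ‖((max x (1 / 2) + δ : ℝ) : UnitAddCircle)‖)

theorem intBump_nonneg (δ x : ℝ) : 0 ≤ intBump δ x := le_max_left _ _

theorem lipschitzWith_intBump (δ : ℝ) : LipschitzWith 1 (intBump δ) := by
  have h_shift : LipschitzWith 1 fun x : ℝ ↦ ((max x (1 / 2) + δ : ℝ) : UnitAddCircle) := by
    refine LipschitzWith.of_dist_le_mul fun x y ↦ ?_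
    rw [dist_eq_norm, ← AddCircle.coe_sub, add_sub_add_right_eq_sub, NNReal.coe_one, one_mul,
      Real.dist_eq]
    refine le_trans ?_ (abs_max_sub_max_le_abs x y (1 / 2))
    simpa using norm_coe_unitAddCircle_le_abs_sub_intCast (max x (1 / 2) - max y (1 / 2)) 0
  have h_norm := (lipschitzWith_one_norm.comp h_shift).neg
  have h_max := ((LipschitzWith.const (4 * δ)).add h_norm).const_max 0
  rw [zero_add, one_mul] at h_max
  exact h_max

theorem norm_coe_unitAddCircle_eq_abs_sub_intCast {x : ℝ} {n : ℤ} (hx : |x - n| ≤ 1 / 2) :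
    ‖(x : UnitAddCircle)‖ = |x - n| := by
  have h_coe : ((x - n : ℝ) : UnitAddCircle) = x := by
    rw [AddCircle.coe_sub, sub_eq_self, AddCircle.coe_eq_zero_iff]
    exact ⟨n, by simp⟩
  rw [← h_coe, AddCircle.norm_coe_eq_abs_iff 1 one_ne_zero, abs_one]
  exact hx

theorem intBump_of_le_half {δ x : ℝ} (hδ : 0 ≤ δ) (hδ' : δ ≤ 1 / 10) (hx : x ≤ 1 / 2) :
    intBump δ x = 0 := by
  have h_abs : |1 / 2 + δ - (1 : ℤ)| = 1 / 2 - δ := by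
    rw [abs_of_nonpos] <;> norm_num <;> linarith
  have h_norm : ‖((1 / 2 + δ : ℝ) : UnitAddCircle)‖ = 1 / 2 - δ := by
    rw [← h_abs]
    exact norm_coe_unitAddCircle_eq_abs_sub_intCast (by linarith)
  rw [intBump, max_eq_right hx, h_norm, max_eq_left (by linarith)]

theorem intBump_le_mul {δ x : ℝ} (hδ : 0 ≤ δ) (hδ' : δ ≤ 1 / 10) (hx : 0 ≤ x) :
    intBump δ x ≤ 8 * δ * x := by
  rcases le_total x (1 / 2) with h | h
  · rw [intBump_of_le_half hδ hδ' h]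
    positivity
  · refine max_le (by positivity) ?_
    have := norm_nonneg ((max x (1 / 2) + δ : ℝ) : UnitAddCircle)
    nlinarith

theorem intBump_add_le_sub {δ x w : ℝ} (hδ : δ ≤ 1 / 10) (hx : δ ≤ x)
    (h_near : ‖(x : UnitAddCircle)‖ < δ) (hw : 0 ≤ w) (hw' : w ≤ 2 * δ) :
    intBump δ (x + w) ≤ intBump δ x - w := by
  rw [UnitAddCircle.norm_eq, abs_lt] at h_near
  set n := round x
  have hn : (1 : ℝ) ≤ n := by
    have : (0 : ℝ) < n := by linarith
    exact_mod_cast this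
  have h_bump (v : ℝ) (hv : 0 ≤ v) (hv' : v ≤ 2 * δ) :
      intBump δ (x + v) = 4 * δ - (x + v + δ - n) := by
    have h_abs : |x + v + δ - n| = x + v + δ - n := abs_of_nonneg (by linarith)
    have h_norm : ‖((x + v + δ : ℝ) : UnitAddCircle)‖ = x + v + δ - n :=
      (norm_coe_unitAddCircle_eq_abs_sub_intCast (by linarith)).trans h_abs
    have h_max : max (x + v) (1 / 2) = x + v := max_eq_left (by linarith)
    rw [intBump, h_max, h_norm, max_eq_right (by linarith)]
  have h_zero := h_bump 0 le_rfl (by linarith)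
  rw [add_zero] at h_zero
  linarith [h_bump w hw hw']

section LinearProd

variable {R ι : Type*} [CommRing R]

theorem fwdDiff_iter_natCast_add_mul (t : R) (g : ℕ → R) (i u : ℕ) :
    Δ_[1] ^[i] (fun v : ℕ ↦ ((v : R) + t) * g v) u =
      (u + i + t) * Δ_[1] ^[i] g u + i * Δ_[1] ^[i - 1] g u := by
  induction i generalizing u with
  | zero => simp
  | succ i ih =>
    rw [Function.iterate_succ_apply', fwdDiff, ih, ih]
    rcases i with - | i
    · simp only [Function.iterate_zero, Function.iterate_succ, id_eq, Function.comp_apply, fwdDiff,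
        Nat.add_sub_cancel]
      push_cast
      ring
    · simp only [Function.iterate_succ_apply', fwdDiff, Nat.add_sub_cancel]
      push_cast
      ring

/-- The polynomial `∏_{l ∈ s} (X + t_l)` as a function on `ℕ`; the Weyl dimension polynomial has
this shape in its last variable, up to a constant factor. -/
def linearProd (s : Finset ι) (t : ι → R) (u : ℕ) : R := ∏ l ∈ s, ((u : R) + t l)

theorem linearProd_cons {a : ι} {s : Finset ι} (ha : a ∉ s) (t : ι → R) :
    linearProd (cons a s ha) t = fun u : ℕ ↦ ((u : R) + t a) * linearProd s t u :=
  funext fun _ ↦ prod_cons ha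

theorem fwdDiff_iter_linearProd_of_card_lt (s : Finset ι) (t : ι → R) {i : ℕ} (hi : #s < i)
    (u : ℕ) : Δ_[1] ^[i] (linearProd s t) u = 0 := by
  induction s using Finset.cons_induction generalizing i with
  | empty =>
    obtain ⟨i, rfl⟩ := Nat.exists_eq_add_one_of_ne_zero hi.ne_bot
    have : linearProd ∅ t = fun _ ↦ 1 := funext fun _ ↦ prod_empty
    have h_zero : Δ_[1] ^[i] (fun _ : ℕ ↦ (0 : R)) = fun _ ↦ 0 :=
      Function.iterate_fixed (fwdDiff_const 1 0) i
    rw [this, Function.iterate_succ_apply, fwdDiff_const, h_zero]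
  | cons a s ha ih =>
    rw [card_cons] at hi
    rw [linearProd_cons, fwdDiff_iter_natCast_add_mul, ih (by lia), ih (by lia), mul_zero,
      mul_zero, add_zero]

theorem fwdDiff_iter_card_linearProd (s : Finset ι) (t : ι → R) (u : ℕ) :
    Δ_[1] ^[#s] (linearProd s t) u = (#s).factorial := by
  induction s using Finset.cons_induction with
  | empty => simp [linearProd]
  | cons a s ha ih =>
    rw [linearProd_cons, fwdDiff_iter_natCast_add_mul, card_cons, Nat.add_sub_cancel, ih,
      fwdDiff_iter_linearProd_of_card_lt s t (Nat.lt_succ_self _), mul_zero, zero_add,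
      Nat.factorial_succ, Nat.cast_mul]

variable [LinearOrder R] [IsStrictOrderedRing R] {s : Finset ι} {t : ι → R}

theorem fwdDiff_iter_linearProd_pos (ht : ∀ l ∈ s, 0 < t l) {i : ℕ} (hi : i ≤ #s) (u : ℕ) :
    0 < Δ_[1] ^[i] (linearProd s t) u := by
  induction s using Finset.cons_induction generalizing i with
  | empty => simp_all [linearProd]
  | cons a s ha ih =>
    have ht_s : ∀ l ∈ s, 0 < t l := fun l hl ↦ ht l (mem_cons_of_mem hl)
    have ht_a := ht a (mem_cons_self a s)
    rw [card_cons] at hi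
    rw [linearProd_cons, fwdDiff_iter_natCast_add_mul]
    rcases hi.eq_or_lt with rfl | hi
    · rw [fwdDiff_iter_linearProd_of_card_lt s t (Nat.lt_succ_self _), mul_zero, zero_add,
        Nat.add_sub_cancel]
      exact mul_pos (by positivity) (ih ht_s le_rfl)
    · have h_i := ih ht_s (i := i) (by lia)
      have h_pred := ih ht_s (i := i - 1) (by lia)
      positivity

theorem fwdDiff_iter_linearProd_le_mul_succ {K : R} {u i : ℕ} (ht : ∀ l ∈ s, 0 < t l)
    (hK : ∀ l ∈ s, u + #s + t l ≤ K) (hi : i < #s) :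
    Δ_[1] ^[i] (linearProd s t) u ≤ K * Δ_[1] ^[i + 1] (linearProd s t) u := by
  induction s using Finset.cons_induction generalizing i with
  | empty => simp at hi
  | cons a s ha ih =>
    have ht_s : ∀ l ∈ s, 0 < t l := fun l hl ↦ ht l (mem_cons_of_mem hl)
    have ht_a := ht a (mem_cons_self a s)
    have hK_a := hK a (mem_cons_self a s)
    have hK_s : ∀ l ∈ s, u + #s + t l ≤ K := fun l hl ↦ by
      have := hK l (mem_cons_of_mem hl)
      rw [card_cons, Nat.cast_succ] at this
      linarith
    rw [card_cons] at hi hK_a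
    rw [linearProd_cons, fwdDiff_iter_natCast_add_mul, fwdDiff_iter_natCast_add_mul,
      Nat.add_sub_cancel]
    have h_pos : 0 < Δ_[1] ^[i] (linearProd s t) u :=
      fwdDiff_iter_linearProd_pos ht_s (Nat.lt_succ_iff.1 hi) u
    have h_succ : 0 ≤ Δ_[1] ^[i + 1] (linearProd s t) u := by
      rcases (Nat.lt_succ_iff.1 hi).eq_or_lt with rfl | hi'
      · exact (fwdDiff_iter_linearProd_of_card_lt s t (Nat.lt_succ_self _) u).ge
      · exact (fwdDiff_iter_linearProd_pos ht_s hi' u).le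
    have h_le_K : (u + i + t a : R) ≤ K := by
      have : (i : R) ≤ (#s + 1 : ℕ) := by exact_mod_cast hi.le
      linarith
    have hK_nonneg : 0 ≤ K := le_trans (by positivity) h_le_K
    have h_pred : i * Δ_[1] ^[i - 1] (linearProd s t) u ≤
        i * (K * Δ_[1] ^[i] (linearProd s t) u) := by
      rcases i with - | i
      · simp
      · exact mul_le_mul_of_nonneg_left (ih ht_s hK_s (by lia)) (Nat.cast_nonneg _)
    calc (u + i + t a) * Δ_[1] ^[i] (linearProd s t) u + i * Δ_[1] ^[i - 1] (linearProd s t) u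
        ≤ K * Δ_[1] ^[i] (linearProd s t) u + i * (K * Δ_[1] ^[i] (linearProd s t) u) := by
          gcongr
      _ = K * ((i + 1 : ℕ) * Δ_[1] ^[i] (linearProd s t) u) := by push_cast; ring
      _ ≤ _ := by
          gcongr
          exact le_add_of_nonneg_left (by positivity)

end LinearProd

section CriticalOrder

variable {f : ℕ → ℝ} {η : ℝ} {d i u : ℕ}

theorem fwdDiff_iter_apply_add_one (f : ℕ → ℝ) (i u : ℕ) :
    Δ_[1] ^[i] f (u + 1) = Δ_[1] ^[i] f u + Δ_[1] ^[i + 1] f u := by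
  rw [Function.iterate_succ_apply', fwdDiff, add_sub_cancel]

theorem monotone_fwdDiff_iter (hpos : ∀ i ≤ d, ∀ u, 0 < Δ_[1] ^[i] f u)
    (hmono : Monotone (Δ_[1] ^[d] f)) (hi : i ≤ d) : Monotone (Δ_[1] ^[i] f) := by
  rcases hi.eq_or_lt with rfl | hi
  · exact hmono
  · refine monotone_nat_of_le_succ fun u ↦ ?_
    rw [fwdDiff_iter_apply_add_one]
    linarith [hpos (i + 1) hi u]

/-- One more than the last index `i < d` with `2 ^ i * η ≤ Δ^i f u`, or `0` if there is no such
index. This `Δ^i f u` is the critical difference of `f` at `u`, beyond which all differences are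
small at their scales. -/
noncomputable def criticalOrder (f : ℕ → ℝ) (η : ℝ) (d u : ℕ) : ℕ :=
  Nat.findGreatest (fun j ↦ 2 ^ (j - 1) * η ≤ Δ_[1] ^[j - 1] f u) d

theorem criticalOrder_le (f : ℕ → ℝ) (η : ℝ) (d u : ℕ) : criticalOrder f η d u ≤ d :=
  Nat.findGreatest_le d

theorem le_fwdDiff_iter_of_criticalOrder_eq_succ (h : criticalOrder f η d u = i + 1) :
    2 ^ i * η ≤ Δ_[1] ^[i] f u :=
  Nat.findGreatest_of_ne_zero h i.succ_ne_zero

theorem fwdDiff_iter_lt_of_criticalOrder_le (htop : Δ_[1] ^[d] f u < 2 ^ d * η)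
    (h : criticalOrder f η d u ≤ i) (hi : i ≤ d) : Δ_[1] ^[i] f u < 2 ^ i * η := by
  rcases hi.eq_or_lt with rfl | hi
  · exact htop
  · exact not_le.1 (Nat.findGreatest_is_greatest (Nat.lt_succ_of_le h) hi)

theorem monotone_criticalOrder (hpos : ∀ i ≤ d, ∀ u, 0 < Δ_[1] ^[i] f u)
    (hmono : Monotone (Δ_[1] ^[d] f)) : Monotone (criticalOrder f η d) := by
  intro u v huv
  rcases h : criticalOrder f η d u with - | i
  · exact Nat.zero_le _
  · have hi : i + 1 ≤ d := h ▸ criticalOrder_le f η d u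
    exact Nat.le_findGreatest hi ((le_fwdDiff_iter_of_criticalOrder_eq_succ h).trans
      (monotone_fwdDiff_iter hpos hmono (i.le_succ.trans hi) huv))

/-- A bound for the number of steps which the critical difference of `f` can still spend near the
same positive integer: its bump divided by its increment. It is `0` if there is no critical
difference. -/
noncomputable def potential (f : ℕ → ℝ) (η : ℝ) (d u : ℕ) : ℝ :=
  match criticalOrder f η d u with
  | 0 => 0
  | i + 1 => intBump (2 ^ i * η) (Δ_[1] ^[i] f u) / Δ_[1] ^[i + 1] f u

/-- The point `u` is productive if its critical difference is good at its scale, which forces a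
good value of `f` in the next `d` points, or if there is no critical difference, so that `f u` is
small. -/
def IsProductive (f : ℕ → ℝ) (η : ℝ) (d u : ℕ) : Prop :=
  match criticalOrder f η d u with
  | 0 => True
  | i + 1 => 2 ^ i * η ≤ ‖((Δ_[1] ^[i] f u : ℝ) : UnitAddCircle)‖

theorem potential_of_criticalOrder_eq_zero (h : criticalOrder f η d u = 0) :
    potential f η d u = 0 := by
  rw [potential, h]

theorem potential_of_criticalOrder_eq_succ (h : criticalOrder f η d u = i + 1) :
    potential f η d u = intBump (2 ^ i * η) (Δ_[1] ^[i] f u) / Δ_[1] ^[i + 1] f u := by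
  rw [potential, h]

theorem potential_nonneg (hpos : ∀ i ≤ d, ∀ u, 0 < Δ_[1] ^[i] f u) (u : ℕ) :
    0 ≤ potential f η d u := by
  rcases h : criticalOrder f η d u with - | i
  · exact (potential_of_criticalOrder_eq_zero h).ge
  · rw [potential_of_criticalOrder_eq_succ h]
    exact div_nonneg (intBump_nonneg _ _) (hpos _ (h ▸ criticalOrder_le f η d u) u).le

theorem two_pow_mul_le_of_lt {c : ℝ} (hη : 0 ≤ η) (hηd : 2 ^ d * η ≤ 2 * c) (hi : i < d) :
    2 ^ i * η ≤ c := by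
  have h_pow : (2 : ℝ) ^ (i + 1) * η ≤ 2 ^ d * η :=
    mul_le_mul_of_nonneg_right (pow_le_pow_right₀ one_le_two hi) hη
  rw [pow_succ] at h_pow
  linarith

theorem potential_le (hη : 0 ≤ η) (hηd : 2 ^ d * η ≤ 1 / 5)
    (hpos : ∀ i ≤ d, ∀ u, 0 < Δ_[1] ^[i] f u) {B : ℝ} (hB : 0 ≤ B)
    (hloss : ∀ i < d, 8 * (2 ^ i * η) * Δ_[1] ^[i] f u ≤ B * Δ_[1] ^[i + 1] f u) :
    potential f η d u ≤ B := by
  rcases h : criticalOrder f η d u with - | i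
  · exact (potential_of_criticalOrder_eq_zero h).trans_le hB
  · have hi : i + 1 ≤ d := h ▸ criticalOrder_le f η d u
    rw [potential_of_criticalOrder_eq_succ h, div_le_iff₀ (hpos _ hi u)]
    have h_bump := intBump_le_mul (by positivity)
      (two_pow_mul_le_of_lt hη (hηd.trans_eq (by norm_num)) hi) (hpos i (by lia) u).le
    exact h_bump.trans (hloss i hi)

theorem potential_succ_of_criticalOrder_lt (hη : 0 ≤ η) (hηd : 2 ^ d * η ≤ 1 / 5)
    (htop : Δ_[1] ^[d] f u < 2 ^ d * η)
    (hlt : criticalOrder f η d u < criticalOrder f η d (u + 1)) : potential f η d (u + 1) = 0 := by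
  obtain ⟨i, hi⟩ := Nat.exists_eq_add_one_of_ne_zero hlt.ne_bot
  have hid : i + 1 ≤ d := hi ▸ criticalOrder_le f η d (u + 1)
  have hle : criticalOrder f η d u ≤ i := by lia
  have hδ := two_pow_mul_le_of_lt hη (hηd.trans_eq (show _ = 2 * (1 / 10) by norm_num)) hid
  have h_i := fwdDiff_iter_lt_of_criticalOrder_le htop hle (by lia)
  have h_succ := fwdDiff_iter_lt_of_criticalOrder_le htop (hle.trans i.le_succ) hid
  rw [potential_of_criticalOrder_eq_succ hi, fwdDiff_iter_apply_add_one f i,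
    intBump_of_le_half (by positivity) hδ, zero_div]
  rw [pow_succ] at h_succ
  linarith

theorem potential_succ_le_div (hη : 0 ≤ η) (hηd : 2 ^ d * η ≤ 1 / 5)
    (hpos : ∀ i ≤ d, ∀ u, 0 < Δ_[1] ^[i] f u) (hmono : Monotone (Δ_[1] ^[d] f))
    (htop : Δ_[1] ^[d] f u < 2 ^ d * η) (h : criticalOrder f η d u = i + 1) :
    potential f η d (u + 1) ≤
      intBump (2 ^ i * η) (Δ_[1] ^[i] f (u + 1)) / Δ_[1] ^[i + 1] f u := by
  have hi : i + 1 ≤ d := h ▸ criticalOrder_le f η d u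
  have h_pos := hpos (i + 1) hi u
  rcases (monotone_criticalOrder (η := η) hpos hmono u.le_succ).eq_or_lt with heq | hlt
  · rw [potential_of_criticalOrder_eq_succ (heq.symm.trans h)]
    exact div_le_div_of_nonneg_left (intBump_nonneg _ _) h_pos
      (monotone_fwdDiff_iter hpos hmono hi u.le_succ)
  · rw [potential_succ_of_criticalOrder_lt hη hηd htop hlt]
    exact div_nonneg (intBump_nonneg _ _) h_pos.le

theorem potential_succ_le_add_one (hη : 0 ≤ η) (hηd : 2 ^ d * η ≤ 1 / 5)
    (hpos : ∀ i ≤ d, ∀ u, 0 < Δ_[1] ^[i] f u) (hmono : Monotone (Δ_[1] ^[d] f))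
    (htop : Δ_[1] ^[d] f u < 2 ^ d * η) :
    potential f η d (u + 1) ≤ potential f η d u + 1 := by
  rcases h : criticalOrder f η d u with - | i
  · rw [potential_of_criticalOrder_eq_zero h]
    rcases h' : criticalOrder f η d (u + 1) with - | j
    · rw [potential_of_criticalOrder_eq_zero h']
      norm_num
    · rw [potential_succ_of_criticalOrder_lt hη hηd htop (by lia)]
      norm_num
  · have h_pos := hpos (i + 1) (h ▸ criticalOrder_le f η d u) u
    have h_bump : intBump (2 ^ i * η) (Δ_[1] ^[i] f (u + 1)) ≤
        intBump (2 ^ i * η) (Δ_[1] ^[i] f u) + Δ_[1] ^[i + 1] f u := by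
      have h_lip := (lipschitzWith_intBump (2 ^ i * η)).le_add_mul
        (Δ_[1] ^[i] f (u + 1)) (Δ_[1] ^[i] f u)
      rwa [Real.dist_eq, sub_eq_of_eq_add' (fwdDiff_iter_apply_add_one f i u), abs_of_pos h_pos,
        NNReal.coe_one, one_mul] at h_lip
    refine (potential_succ_le_div hη hηd hpos hmono htop h).trans ?_
    rw [potential_of_criticalOrder_eq_succ h, div_add_one h_pos.ne']
    gcongr

theorem potential_succ_le_sub_one (hη : 0 ≤ η) (hηd : 2 ^ d * η ≤ 1 / 5)
    (hpos : ∀ i ≤ d, ∀ u, 0 < Δ_[1] ^[i] f u) (hmono : Monotone (Δ_[1] ^[d] f))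
    (htop : Δ_[1] ^[d] f u < 2 ^ d * η) (hu : ¬ IsProductive f η d u) :
    potential f η d (u + 1) ≤ potential f η d u - 1 := by
  rcases h : criticalOrder f η d u with - | i
  · simp [IsProductive, h] at hu
  · have hi : i + 1 ≤ d := h ▸ criticalOrder_le f η d u
    have h_pos := hpos (i + 1) hi u
    have hδ := two_pow_mul_le_of_lt hη (hηd.trans_eq (show _ = 2 * (1 / 10) by norm_num)) hi
    have h_near : ‖((Δ_[1] ^[i] f u : ℝ) : UnitAddCircle)‖ < 2 ^ i * η := by
      simpa [IsProductive, h] using hu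
    have h_step := fwdDiff_iter_lt_of_criticalOrder_le htop h.le hi
    have h_bump := intBump_add_le_sub hδ (le_fwdDiff_iter_of_criticalOrder_eq_succ h) h_near
      h_pos.le (by rw [pow_succ] at h_step; linarith)
    refine (potential_succ_le_div hη hηd hpos hmono htop h).trans ?_
    rw [potential_of_criticalOrder_eq_succ h, div_sub_one h_pos.ne', fwdDiff_iter_apply_add_one]
    gcongr

theorem exists_le_norm_coe_of_le_norm_fwdDiff_iter
    (h : 2 ^ i * η ≤ ‖((Δ_[1] ^[i] f u : ℝ) : UnitAddCircle)‖) :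
    ∃ v, u ≤ v ∧ v ≤ u + i ∧ η ≤ ‖(f v : UnitAddCircle)‖ := by
  have h_comp : Δ_[1] ^[i] (fun v ↦ (f v : UnitAddCircle)) u = (Δ_[1] ^[i] f u : ℝ) :=
    congrFun (fwdDiff_iter_map (QuotientAddGroup.mk' (AddSubgroup.zmultiples (1 : ℝ))) f 1 i) u
  rw [← h_comp] at h
  obtain ⟨j, hj, hη⟩ := exists_le_norm_of_le_norm_fwdDiff_iter i u h
  rw [smul_eq_mul, mul_one] at hη
  exact ⟨u + j, by lia, by lia, hη⟩

theorem le_card_filter_le_norm (N : ℕ)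
    (h : ∀ u, 2 ^ d * η ≤ ‖((Δ_[1] ^[d] f u : ℝ) : UnitAddCircle)‖) :
    N ≤ #{v ∈ range ((d + 1) * N) | η ≤ ‖(f v : UnitAddCircle)‖} := by
  have h_card := card_le_mul_card_of_exists_mem_Ico (s := range ((d + 1) * N - d))
    (t := {v ∈ range ((d + 1) * N) | η ≤ ‖(f v : UnitAddCircle)‖}) (d + 1) fun u hu ↦ by
      obtain ⟨v, huv, hvu, hη⟩ := exists_le_norm_coe_of_le_norm_fwdDiff_iter (h u)
      rw [mem_range] at hu
      exact ⟨v, mem_filter.2 ⟨mem_range.2 (by lia), hη⟩, huv, by lia⟩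
  rw [card_range] at h_card
  by_contra! h_lt
  have := Nat.mul_le_mul_left (d + 1) (Nat.succ_le_of_lt h_lt)
  lia

theorem card_filter_isProductive_le [DecidablePred (IsProductive f η d)] {M L : ℕ}
    (hML : M + d ≤ L + 1) :
    #{u ∈ range M | IsProductive f η d u} ≤ #{u ∈ range M | criticalOrder f η d u = 0} +
      d * #{v ∈ range L | η ≤ ‖(f v : UnitAddCircle)‖} := by
  have h_card := card_le_mul_card_of_exists_mem_Ico
    (s := {u ∈ range M | IsProductive f η d u ∧ criticalOrder f η d u ≠ 0})
    (t := {v ∈ range L | η ≤ ‖(f v : UnitAddCircle)‖}) d fun u hu ↦ by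
      simp only [mem_filter, mem_range] at hu
      obtain ⟨huM, hu, h_ne⟩ := hu
      obtain ⟨i, hi⟩ := Nat.exists_eq_add_one_of_ne_zero h_ne
      have hid : i + 1 ≤ d := hi ▸ criticalOrder_le f η d u
      simp only [IsProductive, hi] at hu
      obtain ⟨v, huv, hvu, hη⟩ := exists_le_norm_coe_of_le_norm_fwdDiff_iter hu
      exact ⟨v, mem_filter.2 ⟨mem_range.2 (by lia), hη⟩, huv, by lia⟩
  have h_split : {u ∈ range M | IsProductive f η d u} ⊆
      {u ∈ range M | criticalOrder f η d u = 0} ∪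
        {u ∈ range M | IsProductive f η d u ∧ criticalOrder f η d u ≠ 0} := fun u hu ↦ by
    simp only [mem_union, mem_filter] at hu ⊢
    tauto
  exact (card_le_card h_split).trans ((card_union_le _ _).trans (by gcongr))

theorem le_two_mul_card_add_potential (hη : 0 ≤ η) (hηd : 2 ^ d * η ≤ 1 / 5)
    (hpos : ∀ i ≤ d, ∀ u, 0 < Δ_[1] ^[i] f u) (hmono : Monotone (Δ_[1] ^[d] f))
    (htop : ∀ u, Δ_[1] ^[d] f u < 2 ^ d * η) {M L : ℕ} (hML : M + d ≤ L + 1) :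
    M ≤ 2 * (#{u ∈ range M | criticalOrder f η d u = 0} +
      d * #{v ∈ range L | η ≤ ‖(f v : UnitAddCircle)‖} : ℕ) + potential f η d 0 := by
  classical
  have h_walk := le_two_mul_card_filter_range_add
    (fun u ↦ potential_succ_le_add_one hη hηd hpos hmono (htop u))
    (fun u ↦ potential_succ_le_sub_one hη hηd hpos hmono (htop u)) M
  have h_productive := card_filter_isProductive_le (f := f) (η := η) hML
  rw [← Nat.cast_le (α := ℝ)] at h_productive
  linarith [potential_nonneg (η := η) hpos M]

theorem le_mul_card_add_card (hd : 1 ≤ d) (hη : 0 ≤ η) (hηd : 2 ^ d * η ≤ 1 / 5)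
    (hpos : ∀ i ≤ d, ∀ u, 0 < Δ_[1] ^[i] f u) (hmono : Monotone (Δ_[1] ^[d] f))
    (htop : ∀ u, Δ_[1] ^[d] f u < 2 ^ d * η) {N : ℕ}
    (hloss : ∀ i < d, 8 * (2 ^ i * η) * Δ_[1] ^[i] f 0 ≤ N * Δ_[1] ^[i + 1] f 0) :
    N ≤ 32 * #{u ∈ range ((d + 1) * N + 1) | η ≤ ‖(f u : UnitAddCircle)‖} +
      #{u ∈ range ((d + 1) * N + 1) | f u < η} := by
  by_contra! h_lt
  have hN : d + 1 ≤ (d + 1) * N := Nat.le_mul_of_pos_right _ (by lia)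
  obtain ⟨M, hM⟩ : ∃ M, M + d = (d + 1) * N + 2 := ⟨(d + 1) * N + 2 - d, by lia⟩
  have h_walk := le_two_mul_card_add_potential hη hηd hpos hmono htop hM.le
  have h_small : #{u ∈ range M | criticalOrder f η d u = 0} ≤
      #{u ∈ range ((d + 1) * N + 1) | f u < η} := card_le_card fun u hu ↦ by
    simp only [mem_filter, mem_range] at hu ⊢
    exact ⟨by lia, by simpa using fwdDiff_iter_lt_of_criticalOrder_le (htop u) hu.2.le d.zero_le⟩
  generalize #{u ∈ range ((d + 1) * N + 1) | η ≤ ‖(f u : UnitAddCircle)‖} = G at *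
  generalize #{u ∈ range ((d + 1) * N + 1) | f u < η} = A at *
  by_cases h₀ : criticalOrder f η d 0 = 0
  · rw [potential_of_criticalOrder_eq_zero h₀, add_zero] at h_walk
    norm_cast at h_walk
    nlinarith
  · have h_none : #{u ∈ range M | criticalOrder f η d u = 0} = 0 :=
      card_eq_zero.2 (filter_eq_empty_iff.2 fun u _ hu ↦
        h₀ (Nat.le_zero.1 ((monotone_criticalOrder hpos hmono u.zero_le).trans_eq hu)))
    have h_start := h_walk.trans
      (add_le_add_right (potential_le hη hηd hpos N.cast_nonneg hloss) _)
    rw [h_none] at h_start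
    norm_cast at h_start
    nlinarith

theorem mul_weight_le_sum_weight (hd : 1 ≤ d) (hη : 0 ≤ η) (hηd : 2 ^ d * η ≤ 1 / 5)
    (hpos : ∀ i ≤ d, ∀ u, 0 < Δ_[1] ^[i] f u) {x : ℝ} (hx : ∀ u, Δ_[1] ^[d] f u = x) {N : ℕ}
    (hloss : ∀ i < d, 8 * (2 ^ i * η) * Δ_[1] ^[i] f 0 ≤ N * Δ_[1] ^[i + 1] f 0) :
    N * weight (2 ^ d * η) x ≤ ∑ u ∈ range ((d + 1) * N + 1), weight η (f u) := by
  have hx_nonneg : 0 ≤ x := hx 0 ▸ (hpos d le_rfl 0).le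
  rw [sum_weight_eq]
  by_cases h_good : 2 ^ d * η ≤ ‖(x : UnitAddCircle)‖
  · have h_card := (le_card_filter_le_norm N fun u ↦ (hx u).symm ▸ h_good).trans
      (card_le_card (filter_subset_filter _ (range_mono (Nat.le_succ _))))
    rw [weight_of_le_norm hx_nonneg h_good, mul_one]
    exact (Nat.cast_le.2 h_card).trans (le_add_of_nonneg_right (by positivity))
  · rw [weight, if_neg h_good, zero_add]
    split_ifs with h_small
    · have hmono : Monotone (Δ_[1] ^[d] f) := fun u v _ ↦ ((hx u).trans (hx v).symm).le
      have h_card := le_mul_card_add_card hd hη hηd hpos hmono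
        (fun u ↦ (hx u).trans_lt h_small) hloss
      rw [← @Nat.cast_le ℝ] at h_card
      push_cast at h_card
      linarith
    · rw [mul_zero]
      positivity

end CriticalOrder

theorem mul_weight_le_sum_weight_mul_linearProd {ι : Type*} {s : Finset ι} {t : ι → ℝ}
    {c η K : ℝ} {N : ℕ} (hs : s.Nonempty) (ht : ∀ l ∈ s, 0 < t l) (hK : ∀ l ∈ s, #s + t l ≤ K)
    (hc : 0 < c) (hη : 0 ≤ η) (hηs : 2 ^ #s * η ≤ 1 / 5) (hηK : 4 * (2 ^ #s * η) * K ≤ N) :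
    N * weight (2 ^ #s * η) (c * (#s).factorial) ≤
      ∑ u ∈ range ((#s + 1) * N + 1), weight η (c * linearProd s t u) := by
  have h_diff (i u : ℕ) :
      Δ_[1] ^[i] (c • linearProd s t) u = c * Δ_[1] ^[i] (linearProd s t) u := by
    rw [fwdDiff_iter_const_smul, Pi.smul_apply, smul_eq_mul]
  refine mul_weight_le_sum_weight (f := c • linearProd s t) hs.card_pos hη hηs
    (fun i hi u ↦ ?_) (fun u ↦ ?_) fun i hi ↦ ?_
  · rw [h_diff]
    exact mul_pos hc (fwdDiff_iter_linearProd_pos ht hi u)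
  · rw [h_diff, fwdDiff_iter_card_linearProd]
  · have h_pos := fwdDiff_iter_linearProd_pos ht hi 0
    have h_loss := fwdDiff_iter_linearProd_le_mul_succ (u := 0) ht
      (fun l hl ↦ by simpa using hK l hl) hi
    have h_pow : 2 * (2 ^ i * η) ≤ 2 ^ #s * η := by
      linarith [two_pow_mul_le_of_lt (c := 2 ^ #s * η / 2) hη (by linarith) hi]
    have hK_nonneg : 0 ≤ K := by
      obtain ⟨l, hl⟩ := hs
      linarith [hK l hl, ht l hl, (#s).cast_nonneg (α := ℝ)]
    rw [h_diff, h_diff]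
    calc 8 * (2 ^ i * η) * (c * Δ_[1] ^[i] (linearProd s t) 0)
        ≤ 8 * (2 ^ i * η) * (c * (K * Δ_[1] ^[i + 1] (linearProd s t) 0)) := by gcongr
      _ = 4 * (2 * (2 ^ i * η)) * K * (c * Δ_[1] ^[i + 1] (linearProd s t) 0) := by ring
      _ ≤ 4 * (2 ^ #s * η) * K * (c * Δ_[1] ^[i + 1] (linearProd s t) 0) := by gcongr
      _ ≤ N * (c * Δ_[1] ^[i + 1] (linearProd s t) 0) := by gcongr

section Apoly

variable {m N : ℕ} {y : Fin m → ℝ}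

/-- The tail `y_l + ⋯ + y_{m-1}`, with coordinates numbered from `0`; it is empty for `l = m`.
When a last coordinate `s` is appended to `y`, the new factors of `hpoly` are the sums
`s + tailSum y l`. -/
noncomputable def tailSum (y : Fin m → ℝ) (l : Fin (m + 1)) : ℝ :=
  ∑ i with l ≤ Fin.castSucc i, y i

theorem hpoly_eq_prod_prod_Iic (y : Fin m → ℝ) :
    hpoly m y = ∏ j, ∏ l ∈ Iic j, ∑ i ∈ Icc l j, y i := by
  rw [hpoly, prod_filter, Fintype.prod_prod_type_right]
  exact prod_congr rfl fun j _ ↦ by rw [← prod_filter]; congr 1; ext; simp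

theorem hpoly_snoc (y : Fin m → ℝ) (s : ℝ) :
    hpoly (m + 1) (Fin.snoc y s) = hpoly m y * ∏ l, (s + tailSum y l) := by
  have h_init (l j : Fin m) :
      ∑ i ∈ Icc l.castSucc j.castSucc, Fin.snoc y s i = ∑ i ∈ Icc l j, y i := by
    rw [← Fin.map_castSuccEmb_Icc, sum_map]
    simp
  have h_last (l : Fin (m + 1)) : ∑ i ∈ Icc l (Fin.last m), Fin.snoc y s i = s + tailSum y l := by
    have : Icc l (Fin.last m) = univ.filter (l ≤ ·) := by ext; simp [Fin.le_last]
    rw [this, sum_filter, Fin.sum_univ_castSucc, tailSum, sum_filter, add_comm]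
    simp [Fin.le_last]
  have h_univ : Iic (Fin.last m) = univ := by ext; simp [Fin.le_last]
  rw [hpoly_eq_prod_prod_Iic, hpoly_eq_prod_prod_Iic, Fin.prod_univ_castSucc, h_univ]
  simp only [h_last, ← Fin.map_castSuccEmb_Iic, prod_map, Fin.coe_castSuccEmb, h_init]

theorem apoly_zero (y : Fin 0 → ℝ) : apoly 0 y = 1 := by
  simp [apoly, hpoly, crconst]

theorem apoly_snoc (y : Fin m → ℝ) (s : ℝ) :
    apoly (m + 1) (Fin.snoc y s) =
      apoly m y / (m + 1).factorial * ∏ l, (s + tailSum y l) := by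
  rw [apoly, hpoly_snoc, crconst, prod_range_succ, apoly, crconst, Nat.cast_mul]
  ring

theorem card_filter_le_castSucc (l : Fin (m + 1)) :
    #{i : Fin m | l ≤ i.castSucc} = (l.rev : ℕ) := by
  have : (univ.filter fun i : Fin m ↦ l ≤ i.castSucc).map Fin.castSuccEmb = Ico l (Fin.last m) := by
    ext i
    induction i using Fin.lastCases <;> simp [Fin.castSucc_lt_last]
  rw [← card_map, this, Fin.card_Ico, Fin.val_last, Fin.val_rev]
  lia

theorem rev_mul_le_tailSum {a : ℝ} (hy : ∀ i, a ≤ y i) (l : Fin (m + 1)) :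
    (l.rev : ℕ) * a ≤ tailSum y l := by
  rw [← card_filter_le_castSucc, ← nsmul_eq_mul]
  exact card_nsmul_le_sum _ _ _ fun i _ ↦ hy i

theorem tailSum_nonneg (hy : ∀ i, 0 ≤ y i) (l : Fin (m + 1)) : 0 ≤ tailSum y l :=
  sum_nonneg fun i _ ↦ hy i

theorem factorial_mul_pow_le_prod_add_tailSum {a s : ℝ} (ha : 0 ≤ a) (hy : ∀ i, a ≤ y i)
    (hs : a ≤ s) : (m + 1).factorial * a ^ (m + 1) ≤ ∏ l, (s + tailSum y l) := by
  have h_fact : ∏ l : Fin (m + 1), ((l.rev : ℕ) + 1 : ℝ) = (m + 1).factorial := by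
    have h_rev := Equiv.prod_comp Fin.revPerm fun l : Fin (m + 1) ↦ ((l : ℕ) + 1 : ℝ)
    simp only [Fin.revPerm_apply] at h_rev
    rw [h_rev, Fin.prod_univ_eq_prod_range (fun i : ℕ ↦ (i + 1 : ℝ)),
      ← prod_range_add_one_eq_factorial]
    push_cast
    rfl
  calc (m + 1).factorial * a ^ (m + 1) = ∏ l : Fin (m + 1), ((l.rev : ℕ) + 1) * a := by
        rw [prod_mul_distrib, h_fact, prod_const, card_univ, Fintype.card_fin]
    _ ≤ ∏ l, (s + tailSum y l) := prod_le_prod (fun l _ ↦ by positivity) fun l _ ↦ by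
        linarith [rev_mul_le_tailSum hy l]

/-- The number `ν_r = r(r+1)/2` of linear factors of `hpoly r`, which is its degree. -/
def numFactors (r : ℕ) : ℕ := r * (r + 1) / 2

theorem numFactors_succ (m : ℕ) : numFactors (m + 1) = numFactors m + (m + 1) := by
  rw [numFactors, numFactors, mul_comm m]
  exact Nat.triangle_succ (m + 1) ▸ by rw [mul_comm]; rfl

theorem mul_add_le_two_pow_numFactors (m : ℕ) :
    m * (m + 5) + 2 * m + 4 ≤ 8 * 2 ^ numFactors m := by
  induction m with
  | zero => norm_num [numFactors]
  | succ m ih =>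
    rw [numFactors_succ, pow_add]
    rcases m.eq_zero_or_pos with rfl | hm
    · norm_num [numFactors]
    · have h_two_pow : 2 ^ 2 ≤ 2 ^ (m + 1) := Nat.pow_le_pow_right two_pos (by lia)
      nlinarith [Nat.mul_le_mul ih h_two_pow]

theorem pow_numFactors_le_apoly {a : ℝ} (ha : 0 ≤ a) (hy : ∀ i, a ≤ y i) :
    a ^ numFactors m ≤ apoly m y := by
  induction m with
  | zero => simp [apoly_zero, numFactors]
  | succ m ih =>
    have h_init := ih (y := Fin.init y) fun i ↦ hy _
    have h_prod := factorial_mul_pow_le_prod_add_tailSum (y := Fin.init y) ha (fun i ↦ hy _)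
      (hy (Fin.last m))
    rw [← Fin.snoc_init_self y, apoly_snoc, numFactors_succ, pow_add, div_mul_eq_mul_div,
      mul_div_assoc]
    gcongr
    · exact (pow_nonneg ha _).trans h_init
    · rwa [le_div_iff₀' (by positivity)]

theorem sum_fin_val_add_three (m : ℕ) : ∑ i : Fin m, ((i : ℕ) + 3 : ℝ) = m * (m + 5) / 2 := by
  induction m with
  | zero => simp
  | succ m ih =>
    rw [Fin.sum_univ_castSucc]
    simp only [Fin.val_castSucc, Fin.val_last, ih]
    push_cast
    ring

theorem tailSum_le (hy₀ : ∀ i, 0 ≤ y i) {a : ℝ} (hy : ∀ i, y i ≤ ((i : ℕ) + 3) * a)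
    (l : Fin (m + 1)) : tailSum y l ≤ m * (m + 5) / 2 * a := by
  calc tailSum y l ≤ ∑ i, y i := sum_le_univ_sum_of_nonneg hy₀
    _ ≤ ∑ i : Fin m, ((i : ℕ) + 3) * a := sum_le_sum fun i _ ↦ hy i
    _ = m * (m + 5) / 2 * a := by rw [← sum_mul, sum_fin_val_add_three]

theorem succ_add_tailSum_le {a : ℝ} (ha : 1 ≤ a) (hy₀ : ∀ i, 0 ≤ y i)
    (hy : ∀ i, y i ≤ ((i : ℕ) + 3) * a) (l : Fin (m + 1)) :
    (m + 1) + (a + tailSum y l) ≤ 4 * 2 ^ numFactors m * a := by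
  have h_pow : (m * (m + 5) + 2 * m + 4 : ℝ) ≤ 8 * 2 ^ numFactors m := by
    exact_mod_cast mul_add_le_two_pow_numFactors m
  nlinarith [tailSum_le hy₀ hy l, mul_le_mul_of_nonneg_right h_pow (zero_le_one.trans ha),
    m.cast_nonneg (α := ℝ)]

theorem mul_weight_apoly_le_sum_weight_apoly_snoc {ε θ : ℝ} (hN : 1 ≤ N) (hε : 0 < ε)
    (hε' : ε ≤ 1 / 16) (hθ : 0 < θ) (hy : ∀ i, N ≤ y i) (hy' : ∀ i, y i ≤ ((i : ℕ) + 3) * N) :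
    N * weight (ε / 2 ^ numFactors m) (θ * apoly m y) ≤ ∑ u ∈ range ((m + 2) * N + 1),
      weight (ε / 2 ^ numFactors (m + 1)) (θ * apoly (m + 1) (Fin.snoc y (N + u))) := by
  have hN₁ : (1 : ℝ) ≤ N := Nat.one_le_cast.2 hN
  have hy₀ : ∀ i, 0 ≤ y i := fun i ↦ N.cast_nonneg.trans (hy i)
  have h_apoly : 0 < apoly m y := (by positivity : (0 : ℝ) < N ^ numFactors m).trans_le
    (pow_numFactors_le_apoly N.cast_nonneg hy)
  set t : Fin (m + 1) → ℝ := fun l ↦ N + tailSum y l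
  set c : ℝ := θ * apoly m y / (m + 1).factorial
  have h_value (u : ℕ) :
      θ * apoly (m + 1) (Fin.snoc y (N + u)) = c * linearProd univ t u := by
    have h_factor (l : Fin (m + 1)) : (N + u : ℝ) + tailSum y l = u + t l := by ring
    simp only [apoly_snoc, h_factor, linearProd, c]
    ring
  have h_card : #(univ : Finset (Fin (m + 1))) = m + 1 := by simp
  have h_scale : 2 ^ (m + 1) * (ε / 2 ^ numFactors (m + 1)) = ε / 2 ^ numFactors m := by
    rw [numFactors_succ]
    field_simp
    ring
  have h_step := mul_weight_le_sum_weight_mul_linearProd (s := univ) (t := t) (c := c)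
    (η := ε / 2 ^ numFactors (m + 1)) (K := 4 * 2 ^ numFactors m * N) (N := N) univ_nonempty
    (fun l _ ↦ add_pos_of_pos_of_nonneg (by positivity) (tailSum_nonneg hy₀ l))
    (fun l _ ↦ by simpa [t] using succ_add_tailSum_le hN₁ hy₀ hy' l)
    (by positivity) (by positivity)
  rw [h_card, h_scale, div_mul_cancel₀ _ (by positivity)] at h_step
  simp only [h_value]
  refine h_step ?_ ?_
  · exact (div_le_self hε.le (one_le_pow₀ one_le_two)).trans (by linarith)
  · field_simp
    nlinarith

end Apoly

section Box

/-- The box `Λ_{N,r}`. Coordinates are numbered from `0`, so the upper bound `(j + 2) * N` of the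
paper becomes `(j + 3) * N`. -/
noncomputable def weylBox (N r : ℕ) : Finset (Fin r → ℤ) :=
  Fintype.piFinset fun j ↦ Icc (N : ℤ) (((j : ℕ) + 3) * N)

variable {N m : ℕ} {k : Fin m → ℤ}

theorem le_of_mem_weylBox (hk : k ∈ weylBox N m) (i : Fin m) : (N : ℝ) ≤ k i := by
  exact_mod_cast (mem_Icc.1 (Fintype.mem_piFinset.1 hk i)).1

theorem le_mul_of_mem_weylBox (hk : k ∈ weylBox N m) (i : Fin m) :
    (k i : ℝ) ≤ ((i : ℕ) + 3) * N := by
  exact_mod_cast (mem_Icc.1 (Fintype.mem_piFinset.1 hk i)).2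

theorem sum_weylBox_succ {M : Type*} [AddCommMonoid M] (g : (Fin (m + 1) → ℤ) → M) :
    ∑ k ∈ weylBox N (m + 1), g k =
      ∑ k ∈ weylBox N m, ∑ u ∈ range ((m + 2) * N + 1), g (Fin.snoc k (N + u : ℤ)) := by
  have h_box := filter_piFinset_eq_map_snocEquiv
    (fun j : Fin (m + 1) ↦ Icc (N : ℤ) (((j : ℕ) + 3) * N)) fun _ ↦ True
  have h_len : (((m : ℤ) + 3) * N + 1 - N).toNat = (m + 2) * N + 1 := by
    have : ((m : ℤ) + 3) * N + 1 - N = ((m + 2) * N + 1 : ℕ) := by push_cast; ring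
    rw [this, Int.toNat_natCast]
  simp only [filter_true] at h_box
  rw [weylBox, h_box, sum_map, sum_product_right, Fin.val_last, Int.Icc_eq_finset_map, h_len]
  simp only [sum_map]
  rfl

theorem pow_div_le_sum_weylBox_weight {ε θ : ℝ} (hN : 1 ≤ N) (hε : 0 < ε)
    (hε' : ε ≤ 1 / 16) (hθ : 0 < θ) (hθ' : θ ≤ 1 - ε) (m : ℕ) :
    (N : ℝ) ^ m / 32 ≤
      ∑ k ∈ weylBox N m, weight (ε / 2 ^ numFactors m) (θ * apoly m fun i ↦ k i) := by
  induction m with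
  | zero =>
    have h_base : 1 / 32 ≤ weight ε θ := by
      rcases lt_or_ge θ ε with h | h
      · rw [weight, if_pos h]
        exact le_add_of_nonneg_left (by positivity)
      · rw [weight_of_le_norm hθ.le (le_norm_coe_unitAddCircle h hθ')]
        norm_num
    simpa [apoly_zero, numFactors, weylBox] using h_base
  | succ m ih =>
    have h_cast (k : Fin m → ℤ) (s : ℤ) :
        (fun i ↦ ((Fin.snoc k s : Fin (m + 1) → ℤ) i : ℝ)) = Fin.snoc (fun i ↦ (k i : ℝ)) s :=
      Fin.comp_snoc (Int.cast : ℤ → ℝ) k s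
    rw [sum_weylBox_succ]
    simp only [h_cast, Int.cast_add, Int.cast_natCast]
    calc (N : ℝ) ^ (m + 1) / 32 = N * (N ^ m / 32) := by ring
      _ ≤ N * ∑ k ∈ weylBox N m, weight (ε / 2 ^ numFactors m) (θ * apoly m fun i ↦ k i) := by
          gcongr
      _ ≤ _ := by
          rw [mul_sum]
          exact sum_le_sum fun k hk ↦ mul_weight_apoly_le_sum_weight_apoly_snoc hN hε hε' hθ
            (le_of_mem_weylBox hk) (le_mul_of_mem_weylBox hk)

end Box

theorem stmt11_general (r : ℕ) (ε : ℝ) (hε : 0 < ε) (hε' : ε ≤ 1 / 16) (N : ℕ) (hN : 1 ≤ N)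
    (θ : ℝ) (hθ : ε / (N : ℝ) ^ (r * (r + 1) / 2) ≤ θ) (hθ' : θ ≤ 1 - ε) :
    sin (π * ε / 2 ^ (r * (r + 1) / 2)) ^ 2 / 32 * (N : ℝ) ^ r ≤
      ∑ k ∈ Fintype.piFinset (fun j : Fin r ↦ Icc (N : ℤ) (((j : ℕ) + 3) * N)),
        sin (π * θ * apoly r (fun i ↦ (k i : ℝ))) ^ 2 := by
  set δ := ε / 2 ^ numFactors r
  have h_pow : (0 : ℝ) < N ^ numFactors r := by positivity
  have hθ_pos : 0 < θ := (div_pos hε h_pow).trans_le hθ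
  have h_large : ∀ k ∈ weylBox N r, δ ≤ θ * apoly r fun i ↦ k i := fun k hk ↦ by
    calc δ ≤ ε := div_le_self hε.le (one_le_pow₀ one_le_two)
      _ ≤ θ * N ^ numFactors r := (div_le_iff₀ h_pow).1 hθ
      _ ≤ _ := by
        gcongr
        exact pow_numFactors_le_apoly N.cast_nonneg (le_of_mem_weylBox hk)
  calc sin (π * ε / 2 ^ numFactors r) ^ 2 / 32 * (N : ℝ) ^ r
      = sin (π * δ) ^ 2 * (N ^ r / 32) := by rw [mul_div_assoc]; ring
    _ ≤ sin (π * δ) ^ 2 * ∑ k ∈ weylBox N r, weight δ (θ * apoly r fun i ↦ k i) := by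
        gcongr
        exact pow_div_le_sum_weylBox_weight hN hε hε' hθ_pos hθ' r
    _ ≤ ∑ k ∈ weylBox N r, sin (π * θ * apoly r fun i ↦ k i) ^ 2 := by
        simp only [mul_sum, mul_assoc π θ]
        exact sum_le_sum fun k hk ↦ sin_sq_mul_weight_le (by positivity) (h_large k hk)

/-- Corollary 3.2: `∑_{k ∈ Λ_{N,r}} sin²(πθ a_r(k)) ≥ (sin²(2^{-ν_r}πε)/32) N^r`
for `εN^{-ν_r} ≤ θ ≤ 1/2`, where `ν_r = r(r+1)/2`. -/
theorem stmt11 (r : ℕ) (hr : 2 ≤ r) (ε : ℝ) (hε : 0 < ε) (hε' : ε ≤ 1 / 32)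
    (N : ℕ) (hN : 4 ≤ N) (θ : ℝ)
    (hθ : ε / (N : ℝ) ^ (r * (r + 1) / 2) ≤ θ) (hθ' : θ ≤ 1 / 2) :
    Real.sin (Real.pi * ε / 2 ^ (r * (r + 1) / 2)) ^ 2 / 32 * (N : ℝ) ^ r ≤
      ∑ k ∈ Fintype.piFinset (fun j : Fin r => Finset.Icc (N : ℤ) (((j : ℕ) + 3) * N)),
        Real.sin (Real.pi * θ * apoly r (fun i => (k i : ℝ))) ^ 2 :=
  stmt11_general r ε hε (by linarith) N (by lia) θ hθ (by linarith)
end
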